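/- arXiv:1410.8079 — 3 statements merged into one kernel-verified Lean document; each statement's English description precedes it below -/
import Mathlib

section
/- Let 0 < α < n, p > 1 (with p ≤ n/α), and let w ∈ 𝓛^{α,p} be nonnegative. Then the Kerman–Sawyer quantity sup over dyadic cubes Q of (∫_Q w)^{-1} ∫_Q∫_Q w(x)w(y)|x−y|^{α−n} dx dy is bounded by C ‖w‖_{𝓛^{α,p}} with C depending only on n, α, p. -/
open MeasureTheory ENNReal Metric Set Filter
open scoped FourierTransform
noncomputable section

abbrev Euc (n : ℕ) := EuclideanSpace ℝ (Fin n)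

/-- The axis-parallel cube with corner `a` and side length `s`. -/
def cube {n : ℕ} (a : Fin n → ℝ) (s : ℝ) : Set (Euc n) :=
  {x | ∀ i, a i ≤ x i ∧ x i ≤ a i + s}

/-- The Morrey norm `‖V‖_{𝓛^{α,p}} = sup_Q |Q|^{α/n} ((1/|Q|)∫_Q V^p)^{1/p}`. -/
def morrey (n : ℕ) (α p : ℝ) (V : Euc n → ℝ) : ℝ≥0∞ :=
  ⨆ (a : Fin n → ℝ) (s : ℝ) (_ : 0 < s),
    volume (cube a s) ^ (α / n) *
      ((volume (cube a s))⁻¹ * ∫⁻ y in cube a s, ENNReal.ofReal (V y ^ p)) ^ (1 / p)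

/-- The Kerman–Sawyer quantity: sup over dyadic cubes `Q` of
`(∫_Q w)⁻¹ ∫_Q ∫_Q w(x) w(y) |x-y|^{α-n} dx dy`. -/
def ksQ (n : ℕ) (α : ℝ) (w : Euc n → ℝ) : ℝ≥0∞ :=
  ⨆ (k : ℤ) (m : Fin n → ℤ),
    (∫⁻ x in cube (fun i => (2 : ℝ) ^ k * m i) ((2 : ℝ) ^ k), ENNReal.ofReal (w x))⁻¹ *
      ∫⁻ x in cube (fun i => (2 : ℝ) ^ k * m i) ((2 : ℝ) ^ k),
        ∫⁻ y in cube (fun i => (2 : ℝ) ^ k * m i) ((2 : ℝ) ^ k),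
          ENNReal.ofReal (w x) * ENNReal.ofReal (w y) * ENNReal.ofReal ‖x - y‖ ^ (α - n)

lemma ks_int_Ioi {a r : ℝ} (ha : 0 < a) (hr : 0 < r) :
    ∫⁻ t in Ioi r, ENNReal.ofReal t ^ (-a - 1) = ENNReal.ofReal r ^ (-a) * ENNReal.ofReal (1 / a) := by
  have h1 : ∫⁻ t in Ioi r, ENNReal.ofReal t ^ (-a - 1) = ∫⁻ t in Ioi r, ENNReal.ofReal (t ^ (-a - 1)) := by
    refine setLIntegral_congr_fun measurableSet_Ioi fun t ht => ?_
    exact ENNReal.ofReal_rpow_of_pos (hr.trans ht)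
  rw [h1, ← ofReal_integral_eq_lintegral_ofReal (integrableOn_Ioi_rpow_of_lt (by linarith) hr),
    integral_Ioi_rpow_of_lt (by linarith) hr, ENNReal.ofReal_rpow_of_pos hr,
    ← ENNReal.ofReal_mul (by positivity)]
  · congr 1
    rw [show -a - 1 + 1 = -a by ring]
    field_simp
  · filter_upwards [self_mem_ae_restrict measurableSet_Ioi] with t ht
    exact Real.rpow_nonneg (hr.trans ht).le _

lemma ks_int_Ioc {a r : ℝ} (ha : 0 < a) (hr : 0 < r) :
    ∫⁻ t in Ioc 0 r, ENNReal.ofReal t ^ (a - 1) = ENNReal.ofReal r ^ a * ENNReal.ofReal (1 / a) := by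
  have h1 : ∫⁻ t in Ioc 0 r, ENNReal.ofReal t ^ (a - 1) = ∫⁻ t in Ioc 0 r, ENNReal.ofReal (t ^ (a - 1)) := by
    refine setLIntegral_congr_fun measurableSet_Ioc fun t ht => ?_
    exact ENNReal.ofReal_rpow_of_pos ht.1
  have hi : IntervalIntegrable (fun t : ℝ => t ^ (a - 1)) volume 0 r :=
    intervalIntegral.intervalIntegrable_rpow' (by linarith)
  rw [intervalIntegrable_iff_integrableOn_Ioc_of_le hr.le] at hi
  rw [h1, ← ofReal_integral_eq_lintegral_ofReal hi, ← intervalIntegral.integral_of_le hr.le,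
    integral_rpow (Or.inl (by linarith)), ENNReal.ofReal_rpow_of_pos hr,
    ← ENNReal.ofReal_mul (by positivity)]
  · congr 1
    rw [show a - 1 + 1 = a by ring, Real.zero_rpow ha.ne']
    field_simp
    ring
  · filter_upwards [self_mem_ae_restrict measurableSet_Ioc] with t ht
    exact Real.rpow_nonneg ht.1.le _

def Fb {n : ℕ} (g : Euc n → ℝ≥0∞) (x : Euc n) (t : ℝ) : ℝ≥0∞ := ∫⁻ y in ball x t, g y

def TT (n : ℕ) (α : ℝ) (g : Euc n → ℝ≥0∞) (x : Euc n) : ℝ≥0∞ :=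
  ∫⁻ t in Ioi (0 : ℝ), ENNReal.ofReal t ^ (α - n - 1) * Fb g x t

lemma measSet_ball {n : ℕ} : MeasurableSet {q : (Euc n × ℝ) × Euc n | q.2 ∈ ball q.1.1 q.1.2} := by
  simp only [mem_ball]
  exact measurableSet_lt (by fun_prop) (by fun_prop)

lemma Fb_eq {n : ℕ} (g : Euc n → ℝ≥0∞) (x : Euc n) (t : ℝ) :
    Fb g x t = ∫⁻ y, {q : (Euc n × ℝ) × Euc n | q.2 ∈ ball q.1.1 q.1.2}.indicator (fun q => g q.2) ((x, t), y) := by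
  rw [Fb, ← lintegral_indicator measurableSet_ball]
  rfl

lemma meas_Fb {n : ℕ} {g : Euc n → ℝ≥0∞} (hg : Measurable g) :
    Measurable (fun q : Euc n × ℝ => Fb g q.1 q.2) := by
  simp_rw [Fb_eq]
  exact Measurable.lintegral_prod_right' (((hg.comp measurable_snd).indicator measSet_ball))

lemma meas_TT {n : ℕ} {α : ℝ} {g : Euc n → ℝ≥0∞} (hg : Measurable g) : Measurable (TT n α g) := by
  unfold TT
  refine Measurable.lintegral_prod_right' (f := fun q : Euc n × ℝ =>
    ENNReal.ofReal q.2 ^ (α - n - 1) * Fb g q.1 q.2) ?_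
  exact ((measurable_snd.ennreal_ofReal).pow_const _).mul (meas_Fb hg)

lemma Fb_mono {n : ℕ} (g : Euc n → ℝ≥0∞) (x : Euc n) {s t : ℝ} (h : s ≤ t) : Fb g x s ≤ Fb g x t :=
  lintegral_mono_set (ball_subset_ball h)

lemma Fb_le_TT {n : ℕ} {α : ℝ} (hαn : α < n) (g : Euc n → ℝ≥0∞) (x : Euc n) {r : ℝ} (hr : 0 < r) :
    Fb g x r ≤ ENNReal.ofReal (n - α) * ENNReal.ofReal r ^ (n - α) * TT n α g x := by
  have hd : 0 < (n : ℝ) - α := by linarith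
  have e0 : ENNReal.ofReal r ≠ 0 := by simpa using hr
  have h1 : ENNReal.ofReal r ^ (-(n - α)) * ENNReal.ofReal (1 / (n - α)) * Fb g x r ≤ TT n α g x := by
    rw [← ks_int_Ioi hd hr, ← lintegral_mul_const _ (by fun_prop)]
    refine le_trans ?_ (lintegral_mono_set (Ioi_subset_Ioi hr.le))
    refine setLIntegral_mono' measurableSet_Ioi fun t ht => ?_
    rw [show -((n : ℝ) - α) - 1 = α - n - 1 by ring]
    gcongr
    exact Fb_mono g x (le_of_lt ht)
  calc Fb g x r = ENNReal.ofReal (n - α) * ENNReal.ofReal r ^ (n - α) *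
      (ENNReal.ofReal r ^ (-(n - α)) * ENNReal.ofReal (1 / (n - α)) * Fb g x r) := by
        rw [one_div, ENNReal.ofReal_inv_of_pos hd, ENNReal.rpow_neg]
        have a1 : ENNReal.ofReal (n - α) * (ENNReal.ofReal (n - α))⁻¹ = 1 :=
          ENNReal.mul_inv_cancel (by simpa using hαn) (by simp)
        have a2 : ENNReal.ofReal r ^ (n - α) * (ENNReal.ofReal r ^ (n - α))⁻¹ = 1 :=
          ENNReal.mul_inv_cancel (by simp [hr]) (by simp [hr])
        calc _ = (ENNReal.ofReal (n - α) * (ENNReal.ofReal (n - α))⁻¹) *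
              (ENNReal.ofReal r ^ (n - α) * (ENNReal.ofReal r ^ (n - α))⁻¹) * Fb g x r := by
                rw [a1, a2]; simp
          _ = _ := by ring
    _ ≤ _ := by gcongr

/-- kernel bound -/
lemma ker_le_TT {n : ℕ} (hn : 1 ≤ n) {α : ℝ} (hαn : α < n) {g : Euc n → ℝ≥0∞} (hg : Measurable g)
    (x : Euc n) :
    ∫⁻ y, g y * ENNReal.ofReal ‖x - y‖ ^ (α - n) ≤ ENNReal.ofReal (n - α) * TT n α g x := by
  have hd : 0 < (n : ℝ) - α := by linarith
  have : Nonempty (Fin n) := ⟨⟨0, hn⟩⟩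
  have hT : TT n α g x = ∫⁻ y, ∫⁻ t in Ioi (0 : ℝ), ENNReal.ofReal t ^ (α - n - 1) *
      {q : (Euc n × ℝ) × Euc n | q.2 ∈ ball q.1.1 q.1.2}.indicator (fun q => g q.2) ((x, t), y) := by
    rw [lintegral_lintegral_swap]
    · unfold TT
      refine lintegral_congr fun t => ?_
      rw [Fb_eq, lintegral_const_mul]
      exact ((hg.comp measurable_snd).indicator measSet_ball).comp (by fun_prop)
    · apply Measurable.aemeasurable
      refine ((measurable_snd.ennreal_ofReal).pow_const _).mul ?_
      exact ((hg.comp measurable_snd).indicator measSet_ball).comp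
        (f := fun z : Euc n × ℝ => ((x, z.2), z.1)) (by fun_prop)
  rw [hT, ← lintegral_const_mul' _ _ (by simp)]
  refine lintegral_mono_ae ?_
  filter_upwards [Measure.ae_ne volume x] with y hy
  have hr : 0 < ‖x - y‖ := by
    rw [norm_pos_iff, sub_ne_zero]; exact hy.symm
  have h2 : ∫⁻ t in Ioi ‖x - y‖, ENNReal.ofReal t ^ (α - n - 1) * g y ≤
     ∫⁻ t in Ioi (0 : ℝ), ENNReal.ofReal t ^ (α - n - 1) *
      {q : (Euc n × ℝ) × Euc n | q.2 ∈ ball q.1.1 q.1.2}.indicator (fun q => g q.2) ((x, t), y) := by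
    refine le_trans ?_ (lintegral_mono_set (Ioi_subset_Ioi hr.le))
    refine setLIntegral_mono' measurableSet_Ioi fun t ht => ?_
    gcongr
    rw [indicator_of_mem]
    simpa [dist_eq_norm, norm_sub_rev] using ht
  refine le_trans ?_ (mul_le_mul_right h2 _)
  rw [lintegral_mul_const _ (by fun_prop), show α - n - 1 = -((n : ℝ) - α) - 1 by ring,
    ks_int_Ioi hd hr, one_div, ENNReal.ofReal_inv_of_pos hd]
  have a1 : ENNReal.ofReal (n - α) * (ENNReal.ofReal (n - α))⁻¹ = 1 :=
    ENNReal.mul_inv_cancel (by simpa using hαn) (by simp)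
  rw [show -((n : ℝ) - α) = α - n by ring]
  calc _ = (ENNReal.ofReal (n - α) * (ENNReal.ofReal (n - α))⁻¹) * (g y * ENNReal.ofReal ‖x - y‖ ^ (α - n)) := by
        rw [a1, one_mul]
    _ ≤ _ := le_of_eq (by ring)

lemma epow {t : ℝ} (ht : 0 < t) (a b : ℝ) :
    ENNReal.ofReal t ^ a * ENNReal.ofReal t ^ b = ENNReal.ofReal t ^ (a + b) :=
  (ENNReal.rpow_add a b (by simpa using ht) (by simp)).symm

lemma e2 {t : ℝ} (a : ℝ) :
    ENNReal.ofReal (2 * t) ^ a = 2 ^ a * ENNReal.ofReal t ^ a := by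
  rw [ENNReal.ofReal_mul (by norm_num), ENNReal.mul_rpow_of_ne_top (by simp) (by simp)]
  simp

def vB (n : ℕ) : ℝ≥0∞ := volume (ball (0 : Euc n) 1)

lemma vB_ne_top (n : ℕ) : vB n ≠ ⊤ := measure_ball_lt_top.ne

lemma vol_ball {n : ℕ} (x : Euc n) {r : ℝ} (hr : 0 < r) :
    volume (ball x r) = vB n * ENNReal.ofReal r ^ (n : ℝ) := by
  rw [Measure.addHaar_ball_of_pos _ _ hr, finrank_euclideanSpace_fin, ENNReal.ofReal_pow hr.le,
    ENNReal.rpow_natCast, mul_comm, vB]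

lemma Fb_Fb {n : ℕ} {u : Euc n → ℝ≥0∞} (hu : Measurable u) (x : Euc n) {ρ t s r : ℝ}
    (hs : ρ + t ≤ s) (hr0 : 0 < r) (hr : r = ρ ∨ r = t) :
    Fb (fun y => Fb u y t) x ρ ≤ vB n * ENNReal.ofReal r ^ (n : ℝ) * Fb u x s := by
  have h1 : Fb (fun y => Fb u y t) x ρ = ∫⁻ z, ∫⁻ y in ball x ρ,
      {q : (Euc n × ℝ) × Euc n | q.2 ∈ ball q.1.1 q.1.2}.indicator (fun q => u q.2) ((y, t), z) := by
    rw [lintegral_lintegral_swap]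
    · unfold Fb
      refine lintegral_congr fun y => ?_
      exact Fb_eq u y t
    · apply Measurable.aemeasurable
      exact ((hu.comp measurable_snd).indicator measSet_ball).comp
        (f := fun z : Euc n × Euc n => ((z.2, t), z.1)) (by fun_prop)
  rw [h1, Fb, ← lintegral_indicator measurableSet_ball, ← lintegral_const_mul _ (hu.indicator measurableSet_ball)]
  refine lintegral_mono fun z => ?_
  rw [← lintegral_indicator measurableSet_ball]
  by_cases hz : z ∈ ball x s
  · rw [indicator_of_mem hz]
    calc _ ≤ ∫⁻ y, (ball x ρ ∩ ball z t).indicator (fun _ => u z) y := by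
          refine lintegral_mono fun y => ?_
          simp only [indicator, mem_ofPred_eq, mem_inter_iff, mem_ball, dist_comm z y]
          split_ifs <;> simp_all
      _ = u z * volume (ball x ρ ∩ ball z t) := by
          rw [lintegral_indicator (measurableSet_ball.inter measurableSet_ball)]; simp
      _ ≤ u z * (vB n * ENNReal.ofReal r ^ (n : ℝ)) := by
          gcongr
          rcases hr with rfl | rfl
          · rw [← vol_ball x hr0]; exact measure_mono inter_subset_left
          · rw [← vol_ball z hr0]; exact measure_mono inter_subset_right
      _ = _ := mul_comm _ _
  · refine le_of_eq_of_le ?_ zero_le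
    rw [← lintegral_zero (μ := (volume : Measure (Euc n)))]
    refine lintegral_congr fun y => ?_
    simp only [indicator, mem_ofPred_eq, mem_ball, ite_eq_right_iff]
    intro h1 h2
    exfalso
    apply hz
    rw [mem_ball]
    have := dist_triangle z y x
    linarith

lemma Fb_TT {n : ℕ} {α : ℝ} (hα : 0 < α) {u : Euc n → ℝ≥0∞} (hu : Measurable u) (x : Euc n) {ρ : ℝ}
    (hρ : 0 < ρ) :
    Fb (TT n α u) x ρ ≤ vB n * (ENNReal.ofReal (1 / α) * ENNReal.ofReal ρ ^ α * Fb u x (2 * ρ) +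
      ENNReal.ofReal ρ ^ (n : ℝ) *
        ∫⁻ t in Ioi ρ, ENNReal.ofReal t ^ (α - n - 1) * Fb u x (2 * t)) := by
  have h1 : Fb (TT n α u) x ρ = ∫⁻ t in Ioi (0 : ℝ), ENNReal.ofReal t ^ (α - n - 1) *
      Fb (fun y => Fb u y t) x ρ := by
    unfold TT
    conv_lhs => unfold Fb
    rw [lintegral_lintegral_swap]
    · refine lintegral_congr fun t => ?_
      rw [lintegral_const_mul]
      · rfl
      · exact (meas_Fb hu).comp (f := fun y => (y, t)) (by fun_prop)
    · apply Measurable.aemeasurable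
      exact ((measurable_snd.ennreal_ofReal).pow_const _).mul (meas_Fb hu)
  have hm : Measurable (fun t => Fb u x (2 * t)) := (meas_Fb hu).comp (f := fun t => (x, 2 * t)) (by fun_prop)
  rw [h1, ← Ioc_union_Ioi_eq_Ioi hρ.le, lintegral_union measurableSet_Ioi
    (by rw [Set.disjoint_left]; intro a ha hb; exact absurd ha.2 (not_le.2 hb)), mul_add]
  refine add_le_add ?_ ?_
  · calc _ ≤ ∫⁻ t in Ioc 0 ρ, ENNReal.ofReal t ^ (α - 1) * (vB n * Fb u x (2 * ρ)) := by
          refine setLIntegral_mono' measurableSet_Ioc fun t ht => ?_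
          calc _ ≤ ENNReal.ofReal t ^ (α - n - 1) * (vB n * ENNReal.ofReal t ^ (n : ℝ) * Fb u x (2 * ρ)) := by
                gcongr
                exact Fb_Fb hu x (by linarith [ht.2]) ht.1 (Or.inr rfl)
            _ = (ENNReal.ofReal t ^ (α - n - 1) * ENNReal.ofReal t ^ (n : ℝ)) * (vB n * Fb u x (2 * ρ)) := by ring
            _ = _ := by rw [epow ht.1]; congr 2; ring
      _ = _ := by rw [lintegral_mul_const _ (by fun_prop), ks_int_Ioc hα hρ]; ring
  · rw [← mul_assoc, ← lintegral_const_mul _ (by fun_prop)]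
    refine setLIntegral_mono' measurableSet_Ioi fun t ht => ?_
    calc _ ≤ ENNReal.ofReal t ^ (α - n - 1) * (vB n * ENNReal.ofReal ρ ^ (n : ℝ) * Fb u x (2 * t)) := by
            gcongr
            exact Fb_Fb hu x (by have : ρ < t := ht; linarith) hρ (Or.inl rfl)
      _ = _ := by ring

lemma scale_TT {n : ℕ} {α : ℝ} {u : Euc n → ℝ≥0∞} (hu : Measurable u) (x : Euc n) :
    ∫⁻ t in Ioi (0 : ℝ), ENNReal.ofReal t ^ (α - n - 1) * Fb u x (2 * t) =
      2 ^ (n - α) * TT n α u x := by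
  have hm : Measurable (fun t => Fb u x t) := (meas_Fb hu).comp (f := fun t => (x, t)) (by fun_prop)
  have h1 : TT n α u x = 2 * ∫⁻ t in Ioi (0 : ℝ), ENNReal.ofReal (2 * t) ^ (α - n - 1) * Fb u x (2 * t) := by
    unfold TT
    rw [← lintegral_indicator measurableSet_Ioi, ← lintegral_indicator measurableSet_Ioi]
    conv_lhs => rw [← Real.smul_map_volume_mul_left (two_ne_zero (α := ℝ))]
    rw [lintegral_smul_measure, lintegral_map ((by fun_prop : Measurable _).indicator measurableSet_Ioi) (by fun_prop)]
    simp only [abs_two, smul_eq_mul]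
    congr 1
    · simp
    refine lintegral_congr fun t => ?_
    simp [indicator]
  rw [h1]
  simp_rw [e2, mul_assoc]
  rw [lintegral_const_mul _ (by fun_prop), ← mul_assoc, ← mul_assoc]
  have : (2 : ℝ≥0∞) ^ ((n : ℝ) - α) * 2 * 2 ^ (α - n - 1) = 1 := by
    have a0 : (2 : ℝ≥0∞) ≠ 0 := by simp
    have a1 : (2 : ℝ≥0∞) ≠ ⊤ := by simp
    nth_rw 2 [← ENNReal.rpow_one 2]
    rw [← ENNReal.rpow_add _ _ a0 a1, ← ENNReal.rpow_add _ _ a0 a1]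
    ring_nf; simp
  rw [this, one_mul]

lemma Fb_TT_le1 {n : ℕ} {α : ℝ} (hα : 0 < α) (hαn : α < n) : ∃ C : ℝ≥0∞, C ≠ ⊤ ∧
    ∀ (u : Euc n → ℝ≥0∞), Measurable u → ∀ (x : Euc n) (ρ : ℝ), 0 < ρ →
    Fb (TT n α u) x ρ ≤ C * ENNReal.ofReal ρ ^ (n : ℝ) * TT n α u x := by
  refine ⟨vB n * (ENNReal.ofReal (1 / α) * (ENNReal.ofReal (n - α) * 2 ^ (n - α)) + 2 ^ (n - α)), ?_, ?_⟩
  · have := vB_ne_top n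
    have h2 : (2 : ℝ≥0∞) ^ ((n : ℝ) - α) ≠ ⊤ := ENNReal.rpow_ne_top_of_ne_zero (by simp) (by simp)
    exact ENNReal.mul_ne_top this (ENNReal.add_ne_top.2 ⟨ENNReal.mul_ne_top (by simp) (ENNReal.mul_ne_top (by simp) h2), h2⟩)
  intro u hu x ρ hρ
  have hp : ENNReal.ofReal ρ ^ (n : ℝ) = ENNReal.ofReal ρ ^ α * ENNReal.ofReal ρ ^ (n - α) := by
    rw [epow hρ]; congr 1; ring
  calc _ ≤ _ := Fb_TT hα hu x hρ
    _ ≤ vB n * (ENNReal.ofReal (1 / α) * ENNReal.ofReal ρ ^ α *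
          (ENNReal.ofReal (n - α) * ENNReal.ofReal (2 * ρ) ^ (n - α) * TT n α u x) +
        ENNReal.ofReal ρ ^ (n : ℝ) * (2 ^ (n - α) * TT n α u x)) := by
        gcongr
        · exact Fb_le_TT hαn u x (by positivity)
        · rw [← scale_TT hu]
          exact lintegral_mono_set (Ioi_subset_Ioi hρ.le)
    _ = _ := by rw [e2, hp]; ring

lemma Fb_TT_le2 {n : ℕ} {α p : ℝ} (hα : 0 < α) (hp : 1 < p) : ∃ C : ℝ≥0∞, C ≠ ⊤ ∧
    ∀ (u : Euc n → ℝ≥0∞), Measurable u → ∀ A : ℝ≥0∞, (∀ x : Euc n, ∀ r : ℝ, 0 < r →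
      Fb u x r ≤ A * ENNReal.ofReal r ^ (n - α * p)) → ∀ (x : Euc n) (ρ : ℝ), 0 < ρ →
    Fb (TT n α u) x ρ ≤ C * (A * ENNReal.ofReal ρ ^ (n + α - α * p)) := by
  have hd : 0 < α * p - α := by nlinarith
  refine ⟨vB n * (ENNReal.ofReal (1 / α) * 2 ^ (n - α * p) +
    2 ^ (n - α * p) * ENNReal.ofReal (1 / (α * p - α))), ?_, ?_⟩
  · have := vB_ne_top n
    have h2 : (2 : ℝ≥0∞) ^ ((n : ℝ) - α * p) ≠ ⊤ := ENNReal.rpow_ne_top_of_ne_zero (by simp) (by simp)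
    exact ENNReal.mul_ne_top this (ENNReal.add_ne_top.2 ⟨ENNReal.mul_ne_top (by simp) h2, ENNReal.mul_ne_top h2 (by simp)⟩)
  intro u hu A hA x ρ hρ
  have hq : ENNReal.ofReal ρ ^ (n + α - α * p) = ENNReal.ofReal ρ ^ α * ENNReal.ofReal ρ ^ (n - α * p) := by
    rw [epow hρ]; congr 1; ring
  have hq' : ENNReal.ofReal ρ ^ (n + α - α * p) = ENNReal.ofReal ρ ^ (n : ℝ) * ENNReal.ofReal ρ ^ (-(α * p - α)) := by
    rw [epow hρ]; congr 1; ring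
  calc _ ≤ _ := Fb_TT hα hu x hρ
    _ ≤ vB n * (ENNReal.ofReal (1 / α) * ENNReal.ofReal ρ ^ α * (A * ENNReal.ofReal (2 * ρ) ^ (n - α * p)) +
        ENNReal.ofReal ρ ^ (n : ℝ) * ∫⁻ t in Ioi ρ, ENNReal.ofReal t ^ (-(α * p - α) - 1) * (A * 2 ^ (n - α * p))) := by
        refine mul_le_mul_right (add_le_add (mul_le_mul_right ?_ _) (mul_le_mul_right ?_ _)) _
        · exact hA x _ (by positivity)
        · refine setLIntegral_mono' measurableSet_Ioi fun t ht => ?_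
          have ht0 : 0 < t := hρ.trans ht
          calc _ ≤ ENNReal.ofReal t ^ (α - n - 1) * (A * ENNReal.ofReal (2 * t) ^ (n - α * p)) := by
                gcongr
                exact hA x _ (by positivity)
            _ = (ENNReal.ofReal t ^ (α - n - 1) * ENNReal.ofReal t ^ (n - α * p)) * (A * 2 ^ (n - α * p)) := by
                rw [e2]; ring
            _ = _ := by rw [epow ht0]; congr 2; ring
    _ = vB n * (ENNReal.ofReal (1 / α) * 2 ^ (n - α * p) * (A * (ENNReal.ofReal ρ ^ α * ENNReal.ofReal ρ ^ (n - α * p))) +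
        2 ^ (n - α * p) * ENNReal.ofReal (1 / (α * p - α)) * (A * (ENNReal.ofReal ρ ^ (n : ℝ) * ENNReal.ofReal ρ ^ (-(α * p - α))))) := by
        rw [lintegral_mul_const _ (by fun_prop), ks_int_Ioi hd hρ, e2]; ring
    _ = _ := by rw [← hq, ← hq']; ring

lemma Fb_holder {n : ℕ} {p : ℝ} (hp : 1 < p) {f U : Euc n → ℝ≥0∞} (hf : Measurable f) (hU : Measurable U)
    (x : Euc n) (ρ : ℝ) :
    Fb (fun y => f y * U y ^ (1 - 1 / p)) x ρ ≤
      (Fb (fun y => f y ^ p) x ρ) ^ (1 / p) * (Fb U x ρ) ^ (1 - 1 / p) := by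
  have hc : p.HolderConjugate (p / (p - 1)) := Real.HolderConjugate.conjExponent hp
  have h1 : 1 / (p / (p - 1)) = 1 - 1 / p := by
    have : p - 1 ≠ 0 := by linarith
    have : p ≠ 0 := by linarith
    field_simp
  have := ENNReal.lintegral_mul_le_Lp_mul_Lq (volume.restrict (ball x ρ)) hc (f := f)
    (g := fun y => U y ^ (1 - 1 / p)) hf.aemeasurable (by fun_prop)
  rw [h1] at this
  refine this.trans (le_of_eq ?_)
  unfold Fb
  congr 3
  ext y
  rw [← ENNReal.rpow_mul, ← h1, one_div_mul_cancel, ENNReal.rpow_one]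
  exact hc.symm.pos.ne'

lemma interp {θ : ℝ} (h0 : 0 ≤ θ) (h1 : θ ≤ 1) (D W : ℝ≥0∞) {ρ : ℝ} (hρ : 0 < ρ) (s r : ℝ) :
    (D * ENNReal.ofReal ρ ^ s * W) ^ θ * (D * ENNReal.ofReal ρ ^ r * W) ^ (1 - θ) =
      D * W * ENNReal.ofReal ρ ^ (s * θ + r * (1 - θ)) := by
  have h1' : 0 ≤ 1 - θ := by linarith
  have key : ∀ z : ℝ≥0∞, z ^ θ * z ^ (1 - θ) = z := fun z => by
    rw [← ENNReal.rpow_add_of_nonneg _ _ h0 h1']; simp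
  simp only [ENNReal.mul_rpow_of_nonneg _ _ h0, ENNReal.mul_rpow_of_nonneg _ _ h1']
  rw [← ENNReal.rpow_mul, ← ENNReal.rpow_mul, ← epow hρ]
  calc _ = (D ^ θ * D ^ (1 - θ)) * (W ^ θ * W ^ (1 - θ)) *
        (ENNReal.ofReal ρ ^ (s * θ) * ENNReal.ofReal ρ ^ (r * (1 - θ))) := by ring
    _ = _ := by rw [key, key]

lemma TT_fh {n : ℕ} {α p : ℝ} (hα : 0 < α) (hαn : α < n) (hp : 1 < p) : ∃ C : ℝ≥0∞, C ≠ ⊤ ∧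
    ∀ (f : Euc n → ℝ≥0∞), Measurable f → ∀ m : ℝ≥0∞, m ≠ 0 → m ≠ ⊤ → (∀ x : Euc n, ∀ r : ℝ, 0 < r →
      Fb (fun y => f y ^ p) x r ≤ m ^ p * ENNReal.ofReal r ^ (n - α * p)) → ∀ (x : Euc n),
      TT n α (fun y => f y ^ p) x ≠ 0 → TT n α (fun y => f y ^ p) x ≠ ⊤ → 
      TT n α (fun y => f y * TT n α (fun y => f y ^ p) y ^ (1 - 1 / p)) x ≤
        C * m * TT n α (fun y => f y ^ p) x ^ (1 - 1 / p) := by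
  obtain ⟨C1, hC1, H1⟩ := Fb_TT_le1 (n := n) hα hαn
  obtain ⟨C2, hC2, H2⟩ := Fb_TT_le2 (n := n) hα hp
  have hp0 : 0 < p := by linarith
  have hθ0 : 0 < 1 / p := by positivity
  have hθ1 : 1 / p < 1 := by rw [div_lt_one hp0]; exact hp
  set D : ℝ≥0∞ := ENNReal.ofReal (n - α) + C1 + C2 + 1 with hD
  have hDtop : D ≠ ⊤ := by simp [hD, hC1, hC2]
  have hDd : ENNReal.ofReal (n - α) ≤ D := by rw [hD, add_assoc, add_assoc]; exact le_self_add
  have hDC1 : C1 ≤ D := by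
    rw [hD, add_comm (ENNReal.ofReal _), add_assoc, add_assoc]; exact le_self_add
  have hDC2 : C2 ≤ D := by
    rw [hD, add_comm _ C2, add_assoc]; exact le_self_add
  have hD1 : 1 ≤ D := by rw [hD]; exact le_add_self
  set a1 := α * (1 - 1 / p) with ha1
  set a2 := α * (p - 1) * (1 - 1 / p) with ha2
  have ha1p : 0 < a1 := mul_pos hα (by linarith)
  have ha2p : 0 < a2 := mul_pos (mul_pos hα (by linarith)) (by linarith)
  refine ⟨D * (ENNReal.ofReal (1 / a1) + ENNReal.ofReal (1 / a2)), ENNReal.mul_ne_top hDtop (by simp), ?_⟩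
  intro f hf m hm0 hmt hM x hU0 hUt
  have hu : Measurable (fun y => f y ^ p) := hf.pow_const _
  set u := fun y => f y ^ p with hudef
  have hUm : Measurable (TT n α u) := meas_TT hu
  set U := TT n α u x with hUdef
  have B1 : ∀ ρ, 0 < ρ → Fb (fun y => f y * TT n α u y ^ (1 - 1 / p)) x ρ ≤
      D * U * ENNReal.ofReal ρ ^ ((n - α) * (1 / p) + n * (1 - 1 / p)) := fun ρ hρ => by
    rw [← interp hθ0.le hθ1.le D U hρ]
    refine (Fb_holder hp hf hUm x ρ).trans ?_
    refine mul_le_mul' (ENNReal.rpow_le_rpow ?_ hθ0.le) (ENNReal.rpow_le_rpow ?_ (by linarith))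
    · refine (Fb_le_TT hαn u x hρ).trans ?_
      gcongr
    · refine (H1 u hu x ρ hρ).trans ?_
      gcongr
  have B2 : ∀ ρ, 0 < ρ → Fb (fun y => f y * TT n α u y ^ (1 - 1 / p)) x ρ ≤
      D * m ^ p * ENNReal.ofReal ρ ^ ((n - α * p) * (1 / p) + (n + α - α * p) * (1 - 1 / p)) := fun ρ hρ => by
    rw [← interp hθ0.le hθ1.le D (m ^ p) hρ]
    refine (Fb_holder hp hf hUm x ρ).trans ?_
    refine mul_le_mul' (ENNReal.rpow_le_rpow ?_ hθ0.le) (ENNReal.rpow_le_rpow ?_ (by linarith))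
    · refine (hM x ρ hρ).trans ?_
      calc _ = 1 * ENNReal.ofReal ρ ^ (n - α * p) * m ^ p := by ring
        _ ≤ _ := by gcongr
    · refine (H2 u hu _ hM x ρ hρ).trans ?_
      calc _ = C2 * ENNReal.ofReal ρ ^ (n + α - α * p) * m ^ p := by ring
        _ ≤ _ := by gcongr
  have hmp0 : m ^ p ≠ 0 := by simp [hm0, hmt]
  have hmpt : m ^ p ≠ ⊤ := ENNReal.rpow_ne_top_of_nonneg hp0.le hmt
  have hαp : 0 < α * (p - 1) := mul_pos hα (by linarith)
  obtain ⟨R, hR, hRU⟩ : ∃ R : ℝ, 0 < R ∧ U = m ^ p * ENNReal.ofReal R ^ (-(α * (p - 1))) := by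
    have hq0 : m ^ p / U ≠ 0 := ENNReal.div_ne_zero.2 ⟨hmp0, hUt⟩
    have hqt : m ^ p / U ≠ ⊤ := ENNReal.div_ne_top hmpt hU0
    have hz0 : (m ^ p / U) ^ (1 / (α * (p - 1))) ≠ 0 := by simp only [ne_eq, ENNReal.rpow_eq_zero_iff, hq0, hqt]; simp
    have hzt : (m ^ p / U) ^ (1 / (α * (p - 1))) ≠ ⊤ := ENNReal.rpow_ne_top_of_ne_zero hq0 hqt
    refine ⟨((m ^ p / U) ^ (1 / (α * (p - 1)))).toReal, ENNReal.toReal_pos hz0 hzt, ?_⟩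
    rw [ENNReal.ofReal_toReal hzt, ← ENNReal.rpow_mul, mul_neg, one_div_mul_cancel hαp.ne',
      ENNReal.rpow_neg_one, ENNReal.inv_div (Or.inl hUt) (Or.inl hU0), ENNReal.mul_div_cancel hmp0 hmpt]
  have E1 : U * ENNReal.ofReal R ^ a1 = m ^ p * ENNReal.ofReal R ^ (-a2) := by
    rw [hRU, mul_assoc, epow hR]
    congr 2
    rw [ha1, ha2]; field_simp; ring
  have E2 : m * U ^ (1 - 1 / p) = m ^ p * ENNReal.ofReal R ^ (-a2) := by
    rw [hRU, ENNReal.mul_rpow_of_nonneg _ _ (by linarith), ← ENNReal.rpow_mul, ← ENNReal.rpow_mul, ← mul_assoc]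
    congr 1
    · nth_rw 1 [← ENNReal.rpow_one m]
      rw [← ENNReal.rpow_add _ _ hm0 hmt]
      congr 1
      field_simp; ring
    · congr 1
      rw [ha2]; ring
  rw [TT, ← Ioc_union_Ioi_eq_Ioi hR.le, lintegral_union measurableSet_Ioi
    (by rw [Set.disjoint_left]; intro a ha hb; exact absurd ha.2 (not_le.2 hb))]
  calc _ ≤ (∫⁻ t in Ioc 0 R, ENNReal.ofReal t ^ (a1 - 1) * (D * U)) +
        ∫⁻ t in Ioi R, ENNReal.ofReal t ^ (-a2 - 1) * (D * m ^ p) := by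
        refine add_le_add (setLIntegral_mono' measurableSet_Ioc fun t ht => ?_)
          (setLIntegral_mono' measurableSet_Ioi fun t ht => ?_)
        · refine (mul_le_mul_right (B1 t ht.1) _).trans (le_of_eq ?_)
          rw [mul_comm (D * U), ← mul_assoc, epow ht.1]
          congr 2
          rw [ha1]; field_simp; ring
        · have ht0 : 0 < t := hR.trans ht
          refine (mul_le_mul_right (B2 t ht0) _).trans (le_of_eq ?_)
          rw [mul_comm (D * m ^ p), ← mul_assoc, epow ht0]
          congr 2
          rw [ha2]; field_simp; ring
    _ = D * ENNReal.ofReal (1 / a1) * (U * ENNReal.ofReal R ^ a1) +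
          D * ENNReal.ofReal (1 / a2) * (m ^ p * ENNReal.ofReal R ^ (-a2)) := by
        rw [lintegral_mul_const _ (by fun_prop), lintegral_mul_const _ (by fun_prop),
          ks_int_Ioc ha1p hR, ks_int_Ioi ha2p hR]
        ring
    _ = D * (ENNReal.ofReal (1 / a1) + ENNReal.ofReal (1 / a2)) * (m * U ^ (1 - 1 / p)) := by
        rw [E1, E2]; ring
    _ = _ := by ring

lemma cube_eq {n : ℕ} (a : Fin n → ℝ) (s : ℝ) :
    cube a s = (WithLp.ofLp : Euc n → (Fin n → ℝ)) ⁻¹' (Icc a (fun i => a i + s)) := by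
  ext x
  simp [cube, Pi.le_def, forall_and]

lemma meas_cube {n : ℕ} (a : Fin n → ℝ) (s : ℝ) : MeasurableSet (cube a s) := by
  rw [cube_eq]
  exact (PiLp.volume_preserving_ofLp (Fin n)).measurable measurableSet_Icc

lemma vol_cube {n : ℕ} (a : Fin n → ℝ) (s : ℝ) :
    volume (cube a s) = ENNReal.ofReal s ^ (n : ℝ) := by
  rw [cube_eq, (PiLp.volume_preserving_ofLp (Fin n)).measure_preimage measurableSet_Icc.nullMeasurableSet,
    Real.volume_Icc_pi]
  simp

lemma morrey_Fb {n : ℕ} (hn : 1 ≤ n) {α p : ℝ} (hp : 1 < p) {w : Euc n → ℝ} (hw : 0 ≤ w)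
    {m : ℝ≥0∞} (hm : morrey n α p w ≤ m) (x : Euc n) {r : ℝ} (hr : 0 < r) :
    Fb (fun y => ENNReal.ofReal (w y) ^ p) x r ≤
      (2 ^ ((n - α * p) / p) * m) ^ p * ENNReal.ofReal r ^ (n - α * p) := by
  have hp0 : 0 < p := by linarith
  have hn0 : (0 : ℝ) < n := by exact_mod_cast hn
  set a : Fin n → ℝ := fun i => x i - r
  have hs : 0 < 2 * r := by positivity
  have hsub : ball x r ⊆ cube a (2 * r) := by
    intro y hy i
    rw [mem_ball, dist_eq_norm] at hy
    have h1 : ‖(y - x) i‖ ≤ ‖y - x‖ := PiLp.norm_apply_le _ i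
    rw [PiLp.sub_apply, Real.norm_eq_abs] at h1
    have := abs_le.1 (h1.trans hy.le)
    constructor <;> simp only [a] <;> linarith
  set I := ∫⁻ y in cube a (2 * r), ENNReal.ofReal (w y ^ p) with hI
  have h1 : volume (cube a (2 * r)) ^ (α / n) * ((volume (cube a (2 * r)))⁻¹ * I) ^ (1 / p) ≤ m := by
    refine le_trans ?_ hm
    unfold morrey
    exact le_iSup_of_le a (le_iSup_of_le (2 * r) (le_iSup_of_le hs le_rfl))
  rw [vol_cube, ← ENNReal.rpow_mul, mul_div_cancel₀ _ hn0.ne', ← ENNReal.rpow_neg] at h1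
  have h2 := ENNReal.rpow_le_rpow h1 hp0.le
  rw [ENNReal.mul_rpow_of_nonneg _ _ hp0.le, ← ENNReal.rpow_mul, ← ENNReal.rpow_mul,
    one_div_mul_cancel hp0.ne', ENNReal.rpow_one, ← mul_assoc, epow hs] at h2
  calc Fb (fun y => ENNReal.ofReal (w y) ^ p) x r ≤ ∫⁻ y in cube a (2 * r), ENNReal.ofReal (w y) ^ p :=
        lintegral_mono_set hsub
    _ = I := by
        refine lintegral_congr fun y => ?_
        rw [ENNReal.ofReal_rpow_of_nonneg (hw y) hp0.le]
    _ = ENNReal.ofReal (2 * r) ^ (n - α * p) * (ENNReal.ofReal (2 * r) ^ (α * p + -n) * I) := by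
        rw [← mul_assoc, epow hs]; ring_nf; simp
    _ ≤ ENNReal.ofReal (2 * r) ^ (n - α * p) * m ^ p := by gcongr
    _ = _ := by
        rw [e2, ENNReal.mul_rpow_of_nonneg _ _ hp0.le, ← ENNReal.rpow_mul, div_mul_cancel₀ _ hp0.ne']
        ring

lemma ae_of_balls {n : ℕ} {P : Euc n → Prop} (x : Euc n)
    (h : ∀ r : ℝ, 0 < r → ∀ᵐ y ∂(volume.restrict (ball x r)), P y) : ∀ᵐ y, P y := by
  have := (ae_restrict_iUnion_iff (μ := volume) (fun k : ℕ => ball x (k + 1 : ℝ)) P).2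
    (fun k => h _ (by positivity))
  rwa [iUnion_ball_nat_succ, Measure.restrict_univ] at this

set_option maxHeartbeats 400000 in
lemma ks_main (n : ℕ) (hn : 1 ≤ n) (α p : ℝ) (hα0 : 0 < α) (hαn : α < n) (hp1 : 1 < p) :
    ∃ C : ℝ≥0∞, C ≠ ⊤ ∧ ∀ w : Euc n → ℝ, 0 ≤ w → Measurable w → ∀ m : ℝ≥0∞, m ≠ 0 → m ≠ ⊤ →
      morrey n α p w ≤ m → ∀ Q : Set (Euc n), MeasurableSet Q →
      ∫⁻ x in Q, ∫⁻ y in Q,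
          ENNReal.ofReal (w x) * ENNReal.ofReal (w y) * ENNReal.ofReal ‖x - y‖ ^ (α - n) ≤
        C * m * ∫⁻ x in Q, ENNReal.ofReal (w x) := by
  obtain ⟨C, hC, H⟩ := TT_fh (n := n) hα0 hαn hp1
  obtain ⟨C2, hC2, H2⟩ := Fb_TT_le2 (n := n) hα0 hp1
  have hp0 : 0 < p := by linarith
  have hθ : 0 < 1 - 1 / p := by
    have : 1 / p < 1 := by rw [div_lt_one hp0]; exact hp1
    linarith
  have hc0 : (2 : ℝ≥0∞) ^ (((n : ℝ) - α * p) / p) ≠ 0 := by simp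
  have hct : (2 : ℝ≥0∞) ^ (((n : ℝ) - α * p) / p) ≠ ⊤ := ENNReal.rpow_ne_top_of_ne_zero (by simp) (by simp)
  refine ⟨2 * (ENNReal.ofReal (n - α) * (C * 2 ^ (((n : ℝ) - α * p) / p))),
    ENNReal.mul_ne_top (by simp) (ENNReal.mul_ne_top (by simp) (ENNReal.mul_ne_top hC hct)), ?_⟩
  intro w hw hwm m hm0 hmt hM Q hQ
  set f : Euc n → ℝ≥0∞ := fun y => ENNReal.ofReal (w y) with hfdef
  have hf : Measurable f := hwm.ennreal_ofReal
  set M := 2 ^ (((n : ℝ) - α * p) / p) * m with hMdef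
  have hM0 : M ≠ 0 := mul_ne_zero hc0 hm0
  have hMt : M ≠ ⊤ := ENNReal.mul_ne_top hct hmt
  have hFb : ∀ x : Euc n, ∀ r : ℝ, 0 < r →
      Fb (fun y => f y ^ p) x r ≤ M ^ p * ENNReal.ofReal r ^ (n - α * p) :=
    fun x r hr => morrey_Fb hn hp1 hw hM x hr
  have hu : Measurable (fun y => f y ^ p) := hf.pow_const _
  have hUm : Measurable (TT n α (fun y => f y ^ p)) := meas_TT hu
  have H' := H f hf M hM0 hMt hFb
  have H2' := H2 _ hu _ hFb
  have HF := fun x r hr => Fb_le_TT hαn (fun y => f y ^ p) x (r := r) hr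
  set U := TT n α (fun y => f y ^ p) with hUdef
  by_cases hz : ∃ x0, U x0 = 0
  · obtain ⟨x0, hx0⟩ := hz
    have hf0 : ∀ᵐ y, f y = 0 := by
      refine ae_of_balls x0 fun r hr => ?_
      have h0 : ∫⁻ y in ball x0 r, f y ^ p = 0 := by
        have := HF x0 r hr
        rw [hx0, mul_zero] at this
        exact le_antisymm this zero_le
      rw [lintegral_eq_zero_iff hu] at h0
      filter_upwards [h0] with y hy
      have : f y ^ p = 0 := hy
      rw [ENNReal.rpow_eq_zero_iff_of_pos hp0] at this
      exact this
    have : ∫⁻ x in Q, ∫⁻ y in Q, f x * f y * ENNReal.ofReal ‖x - y‖ ^ (α - n) = 0 := by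
      rw [← lintegral_zero (μ := volume.restrict Q)]
      refine lintegral_congr_ae (ae_restrict_of_ae ?_)
      filter_upwards [hf0] with x hx
      simp [hx]
    rw [this]; exact zero_le
  push Not at hz
  have hUfin : ∀ᵐ y, U y < ⊤ := by
    refine ae_of_balls 0 fun r hr => ?_
    refine ae_lt_top hUm (ne_top_of_le_ne_top ?_ (H2' 0 r hr))
    exact ENNReal.mul_ne_top hC2 (ENNReal.mul_ne_top (ENNReal.rpow_ne_top_of_nonneg hp0.le hMt)
      (ENNReal.rpow_ne_top_of_ne_zero (by simpa using hr) (by simp)))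
  set h : Euc n → ℝ≥0∞ := fun y => U y ^ (1 - 1 / p) with hhdef
  have hhm : Measurable h := hUm.pow_const _
  have hh0 : ∀ y, h y ≠ 0 := fun y => by
    simp only [hhdef, ne_eq, ENNReal.rpow_eq_zero_iff_of_pos hθ]; exact hz y
  have hht : ∀ᵐ y, h y ≠ ⊤ := by
    filter_upwards [hUfin] with y hy
    exact ENNReal.rpow_ne_top_of_nonneg hθ.le hy.ne
  set K : Euc n → Euc n → ℝ≥0∞ := fun x y => ENNReal.ofReal ‖x - y‖ ^ (α - n) with hK
  have hKm : Measurable (Function.uncurry K) := by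
    simp only [hK, Function.uncurry_def]; fun_prop
  have hKx : ∀ x, Measurable (K x) := fun x => by
    simp only [hK]; fun_prop
  have hKs : ∀ x y, K x y = K y x := fun x y => by simp only [hK, norm_sub_rev]
  set G : Euc n → Euc n → ℝ≥0∞ := fun x y => f x * f y * K x y * (h y / h x) with hG
  have hGm : Measurable (Function.uncurry G) := by
    have h1 : Measurable fun q : Euc n × Euc n => K q.1 q.2 := hKm
    simp only [hG, Function.uncurry_def]
    fun_prop
  have one_le : ∀ a b : ℝ≥0∞, a ≠ 0 → a ≠ ⊤ → b ≠ 0 → b ≠ ⊤ → 1 ≤ a / b + b / a := by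
    intro a b ha hat hb hbt
    rcases le_total a b with hab | hab
    · refine le_trans ?_ le_add_self
      rw [ENNReal.le_div_iff_mul_le (Or.inl ha) (Or.inl hat)]; simpa
    · refine le_trans ?_ le_self_add
      rw [ENNReal.le_div_iff_mul_le (Or.inl hb) (Or.inl hbt)]; simpa
  have hGG : ∫⁻ x in Q, ∫⁻ y in Q, G y x = ∫⁻ x in Q, ∫⁻ y in Q, G x y := by
    rw [lintegral_lintegral_swap]
    exact (hGm.comp measurable_swap).aemeasurable
  calc _ ≤ ∫⁻ x in Q, ∫⁻ y in Q, (G x y + G y x) := by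
        refine lintegral_mono_ae (ae_restrict_of_ae ?_)
        filter_upwards [hht] with x hx
        refine lintegral_mono_ae (ae_restrict_of_ae ?_)
        filter_upwards [hht] with y hy
        calc f x * f y * K x y = f x * f y * K x y * 1 := by ring
          _ ≤ f x * f y * K x y * (h y / h x + h x / h y) := by
            gcongr; exact one_le _ _ (hh0 y) hy (hh0 x) hx
          _ = _ := by simp only [hG]; rw [hKs y x]; ring
    _ = 2 * ∫⁻ x in Q, ∫⁻ y in Q, G x y := by
        have h1 : ∀ x, ∫⁻ y in Q, (G x y + G y x) = (∫⁻ y in Q, G x y) + ∫⁻ y in Q, G y x := fun x => by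
          rw [lintegral_add_left]
          exact hGm.comp (measurable_const.prodMk measurable_id)
        simp_rw [h1]
        rw [lintegral_add_left, hGG, two_mul]
        exact hGm.lintegral_prod_right'
    _ ≤ 2 * ∫⁻ x in Q, ENNReal.ofReal (n - α) * (C * M) * f x := by
        gcongr 2 * ?_
        refine lintegral_mono_ae (ae_restrict_of_ae ?_)
        filter_upwards [hht, hUfin] with x hx hUx
        calc ∫⁻ y in Q, G x y ≤ ∫⁻ y, G x y := setLIntegral_le_lintegral _ _
          _ = ∫⁻ y, (f x / h x) * ((f y * h y) * K x y) := by
            refine lintegral_congr fun y => ?_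
            simp only [hG, div_eq_mul_inv]; ring
          _ = (f x / h x) * ∫⁻ y, (f y * h y) * K x y := by
            rw [lintegral_const_mul]
            exact (hf.mul hhm).mul (hKx x)
          _ ≤ (f x / h x) * (ENNReal.ofReal (n - α) * (C * M * h x)) := by
            gcongr
            refine (ker_le_TT hn hαn (hf.mul hhm) x).trans ?_
            gcongr
            exact H' x (hz x) hUx.ne
          _ = ENNReal.ofReal (n - α) * (C * M) * (f x * (h x / h x)) := by
            simp only [div_eq_mul_inv]; ring
          _ = _ := by rw [ENNReal.div_self (hh0 x) hx, mul_one]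
    _ = _ := by
        rw [lintegral_const_mul _ hf, hMdef]; ring

/-- The Kerman–Sawyer quantity is controlled by the Morrey norm, for `p > 1`. -/
theorem ksQ_le_morrey (n : ℕ) (hn : 1 ≤ n) (α p : ℝ) (hα0 : 0 < α) (hαn : α < n)
    (hp1 : 1 < p) (hpn : p ≤ n / α) :
    ∃ C : ℝ≥0∞, 0 < C ∧ C < ⊤ ∧ ∀ w : Euc n → ℝ, 0 ≤ w → Measurable w →
      ksQ n α w ≤ C * morrey n α p w := by
  obtain ⟨C, hC, H⟩ := ks_main n hn α p hα0 hαn hp1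
  have hC0 : C + 1 ≠ 0 := by simp
  have hCt : C + 1 ≠ ⊤ := by simp [hC]
  refine ⟨C + 1, pos_iff_ne_zero.2 hC0, lt_top_iff_ne_top.2 hCt, fun w hw hwm => ?_⟩
  rw [mul_comm, ← ENNReal.div_le_iff hC0 hCt]
  refine le_of_forall_gt_imp_ge_of_dense fun m hm => ?_
  by_cases hmt : m = ⊤
  · rw [hmt]; exact le_top
  rw [ENNReal.div_le_iff hC0 hCt]
  unfold ksQ
  refine iSup_le fun k => iSup_le fun j => ?_
  rw [mul_comm, ← div_eq_mul_inv]
  refine ENNReal.div_le_of_le_mul ?_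
  refine (H w hw hwm m (ne_bot_of_gt hm) hmt hm.le _ (meas_cube _ _)).trans ?_
  rw [mul_comm m]
  gcongr
  exact le_self_add
end
end

section
/- Combining the Kerman–Sawyer lemma with the Morrey bound: for 0 < α < n, 1 < p ≤ n/α, and nonnegative w ∈ 𝓛^{α,p}, one has the two-weight estimate ‖I_α f‖_{L²(w)} ≤ C ‖w‖_{𝓛^{α,p}} ‖f‖_{L²(w^{-1})} for all measurable f, with C = C(n,α,p). -/
open MeasureTheory ENNReal Metric Set Filter
open scoped FourierTransform
noncomputable section

/-- Unnormalized Riesz potential `I_γ f (x) = ∫ |x-y|^{γ-n} f(y) dy` (`ℝ≥0∞`-valued). -/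
def rieszE {n : ℕ} (γ : ℝ) (f : Euc n → ℝ≥0∞) (x : Euc n) : ℝ≥0∞ :=
  ∫⁻ y, ENNReal.ofReal ‖x - y‖ ^ (γ - n) * f y

lemma rpow_cmp (t d ρ : ℝ) (hd : 0 < d) (h1 : d / 2 ≤ ρ) (h2 : ρ ≤ 2 * d) :
    ENNReal.ofReal ρ ^ (-t) ≤ ENNReal.ofReal (2 ^ |t|) * ENNReal.ofReal (d ^ (-t)) := by
  have hρ : 0 < ρ := by linarith
  rw [ENNReal.ofReal_rpow_of_pos hρ, ← ENNReal.ofReal_mul (by positivity)]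
  apply ENNReal.ofReal_le_ofReal
  rcases le_total 0 t with ht | ht
  · rw [abs_of_nonneg ht]
    calc ρ ^ (-t) ≤ (d / 2) ^ (-t) := Real.rpow_le_rpow_of_nonpos (by positivity) h1 (by linarith)
      _ = _ := by
        rw [Real.div_rpow hd.le (by norm_num), Real.rpow_neg (by norm_num : (0:ℝ) ≤ 2)]
        field_simp
  · rw [abs_of_nonpos ht]
    calc ρ ^ (-t) ≤ (2 * d) ^ (-t) := Real.rpow_le_rpow hρ.le h2 (by linarith)
      _ = _ := Real.mul_rpow (by norm_num) hd.le

lemma ann {n : ℕ} (ν : Measure (Euc n)) (x : Euc n) (A : ℝ≥0∞) (s t : ℝ)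
    (h : ∀ r > 0, ν (ball x r) ≤ A * ENNReal.ofReal (r ^ s)) (ρ : ℝ) (hρ : 0 < ρ) :
    ∫⁻ y in {y | ρ / 2 ≤ ‖x - y‖ ∧ ‖x - y‖ < ρ}, ENNReal.ofReal ‖x - y‖ ^ (-t) ∂ν ≤
      ENNReal.ofReal (2 ^ |t|) * A * ENNReal.ofReal (ρ ^ (s - t)) := by
  calc _ ≤ ∫⁻ y in {y | ρ / 2 ≤ ‖x - y‖ ∧ ‖x - y‖ < ρ},
        ENNReal.ofReal (2 ^ |t|) * ENNReal.ofReal (ρ ^ (-t)) ∂ν := by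
        apply setLIntegral_mono measurable_const
        intro y hy
        exact rpow_cmp t ρ _ hρ hy.1 (by linarith [hy.2])
    _ = ENNReal.ofReal (2 ^ |t|) * ENNReal.ofReal (ρ ^ (-t)) *
        ν {y | ρ / 2 ≤ ‖x - y‖ ∧ ‖x - y‖ < ρ} := by rw [setLIntegral_const]
    _ ≤ ENNReal.ofReal (2 ^ |t|) * ENNReal.ofReal (ρ ^ (-t)) * (A * ENNReal.ofReal (ρ ^ s)) := by
        gcongr
        refine le_trans (measure_mono ?_) (h ρ hρ)
        intro y hy
        rw [mem_ball, dist_comm, dist_eq_norm]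
        exact hy.2
    _ = _ := by
        rw [sub_eq_neg_add, Real.rpow_add hρ, ENNReal.ofReal_mul (by positivity)]
        ring

lemma geom_ne_top (u : ℝ) (hu : 0 < u) :
    ∑' k : ℕ, ENNReal.ofReal (((2:ℝ) ^ (-u)) ^ k) ≠ ⊤ := by
  have h0 : (0:ℝ) ≤ (2:ℝ) ^ (-u) := by positivity
  have h1 : (2:ℝ) ^ (-u) < 1 := Real.rpow_lt_one_of_one_lt_of_neg (by norm_num) (by linarith)
  exact (summable_geometric_of_lt_one h0 h1).tsum_ofReal_ne_top

lemma near_int (n : ℕ) (s t : ℝ) (hs : 0 < s) (hst : t < s) : ∃ C : ℝ≥0∞, C ≠ ⊤ ∧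
    ∀ (ν : Measure (Euc n)) (x : Euc n) (A : ℝ≥0∞), A ≠ ⊤ →
    (∀ r > 0, ν (ball x r) ≤ A * ENNReal.ofReal (r ^ s)) → ∀ R > 0,
    ∫⁻ y in ball x R, ENNReal.ofReal ‖x - y‖ ^ (-t) ∂ν ≤ C * A * ENNReal.ofReal (R ^ (s - t)) := by
  refine ⟨ENNReal.ofReal (2 ^ |t|) * ∑' k : ℕ, ENNReal.ofReal (((2:ℝ) ^ (-(s - t))) ^ k),
    ENNReal.mul_ne_top ENNReal.ofReal_ne_top (geom_ne_top _ (by linarith)), ?_⟩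
  intro ν x A hA h R hR
  have hx : ν {x} = 0 := by
    have hl : Tendsto (fun r : ℝ => A * ENNReal.ofReal (r ^ s)) (nhdsWithin 0 (Ioi 0)) (nhds 0) := by
      have h1 : Tendsto (fun r : ℝ => r ^ s) (nhdsWithin 0 (Ioi 0)) (nhds 0) := by
        have := (Real.continuousAt_rpow_const 0 s (Or.inr hs.le)).tendsto
        rw [Real.zero_rpow hs.ne'] at this
        exact this.mono_left nhdsWithin_le_nhds
      have h2 := ENNReal.Tendsto.const_mul (ENNReal.tendsto_ofReal h1) (Or.inr hA)
      simpa using h2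
    refine le_antisymm (ge_of_tendsto hl ?_) zero_le
    filter_upwards [self_mem_nhdsWithin] with r hr
    exact le_trans (measure_mono (singleton_subset_iff.2 (mem_ball_self hr))) (h r hr)
  have hcov : ball x R ⊆ {x} ∪ ⋃ k : ℕ, {y | (R * (1/2) ^ k) / 2 ≤ ‖x - y‖ ∧
      ‖x - y‖ < R * (1/2) ^ k} := by
    intro y hy
    rw [mem_ball, dist_comm, dist_eq_norm] at hy
    by_cases hxy : y = x
    · left; exact hxy
    right
    have hpos : 0 < ‖x - y‖ := norm_pos_iff.2 (sub_ne_zero.2 (Ne.symm hxy))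
    obtain ⟨k, hk1, hk2⟩ := exists_nat_pow_near_of_lt_one (x := ‖x - y‖ / R) (y := (1/2 : ℝ))
      (by positivity) ((div_le_one hR).2 hy.le) (by norm_num) (by norm_num)
    rw [lt_div_iff₀ hR] at hk1
    rw [div_le_iff₀ hR] at hk2
    rcases hk2.lt_or_eq with hk2 | hk2
    · refine mem_iUnion.2 ⟨k, ?_, ?_⟩
      · rw [pow_succ] at hk1; linarith
      · linarith
    · rcases k with _ | k
      · simp at hk2; linarith
      refine mem_iUnion.2 ⟨k, ?_, ?_⟩
      · rw [hk2, pow_succ]; linarith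
      · rw [hk2, pow_succ]
        have : (0:ℝ) < (1/2)^k * R := by positivity
        linarith
  calc _ ≤ ∫⁻ y in {x} ∪ ⋃ k : ℕ, {y | (R * (1/2) ^ k) / 2 ≤ ‖x - y‖ ∧
      ‖x - y‖ < R * (1/2) ^ k}, ENNReal.ofReal ‖x - y‖ ^ (-t) ∂ν := lintegral_mono_set hcov
    _ ≤ 0 + ∑' k : ℕ, ENNReal.ofReal (2 ^ |t|) * A * ENNReal.ofReal ((R * (1/2)^k) ^ (s - t)) := by
      refine (lintegral_union_le _ _ _).trans (add_le_add ?_ ?_)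
      · rw [setLIntegral_measure_zero _ _ hx]
      · refine (lintegral_iUnion_le _ _).trans (ENNReal.tsum_le_tsum fun k => ?_)
        exact ann ν x A s t h _ (by positivity)
    _ = _ := by
      rw [zero_add, ENNReal.tsum_mul_left]
      have : ∀ k : ℕ, ENNReal.ofReal ((R * (1/2)^k) ^ (s - t)) =
          ENNReal.ofReal (R ^ (s-t)) * ENNReal.ofReal (((2:ℝ) ^ (-(s - t))) ^ k) := by
        intro k
        rw [← ENNReal.ofReal_mul (by positivity), Real.mul_rpow hR.le (by positivity)]
        congr 2
        rw [← Real.rpow_natCast, ← Real.rpow_natCast, ← Real.rpow_mul (by norm_num),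
          ← Real.rpow_mul (by norm_num), one_div, Real.inv_rpow (by norm_num), ← Real.rpow_neg (by norm_num)]
        congr 1; ring
      simp_rw [this]
      rw [ENNReal.tsum_mul_left]
      ring

lemma far_int (n : ℕ) (s t : ℝ) (hst : s < t) : ∃ C : ℝ≥0∞, C ≠ ⊤ ∧
    ∀ (ν : Measure (Euc n)) (x : Euc n) (A : ℝ≥0∞),
    (∀ r > 0, ν (ball x r) ≤ A * ENNReal.ofReal (r ^ s)) → ∀ R > 0,
    ∫⁻ y in (ball x R)ᶜ, ENNReal.ofReal ‖x - y‖ ^ (-t) ∂ν ≤ C * A * ENNReal.ofReal (R ^ (s - t)) := by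
  refine ⟨ENNReal.ofReal (2 ^ |t|) * ENNReal.ofReal (2 ^ (s - t)) * ∑' k : ℕ, ENNReal.ofReal (((2:ℝ) ^ (-(t - s))) ^ k),
    ENNReal.mul_ne_top (ENNReal.mul_ne_top ENNReal.ofReal_ne_top ENNReal.ofReal_ne_top) (geom_ne_top _ (by linarith)), ?_⟩
  intro ν x A h R hR
  have hcov : (ball x R)ᶜ ⊆ ⋃ k : ℕ, {y | (R * 2 * 2 ^ k) / 2 ≤ ‖x - y‖ ∧
      ‖x - y‖ < R * 2 * 2 ^ k} := by
    intro y hy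
    rw [mem_compl_iff, mem_ball, dist_comm, dist_eq_norm, not_lt] at hy
    obtain ⟨k, hk1, hk2⟩ := exists_nat_pow_near (x := ‖x - y‖ / R) (y := (2 : ℝ))
      ((one_le_div hR).2 hy) (by norm_num)
    rw [le_div_iff₀ hR] at hk1
    rw [div_lt_iff₀ hR, pow_succ] at hk2
    exact mem_iUnion.2 ⟨k, by linarith, by linarith⟩
  calc _ ≤ ∫⁻ y in ⋃ k : ℕ, {y | (R * 2 * 2 ^ k) / 2 ≤ ‖x - y‖ ∧
      ‖x - y‖ < R * 2 * 2 ^ k}, ENNReal.ofReal ‖x - y‖ ^ (-t) ∂ν := lintegral_mono_set hcov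
    _ ≤ ∑' k : ℕ, ENNReal.ofReal (2 ^ |t|) * A * ENNReal.ofReal ((R * 2 * 2^k) ^ (s - t)) := by
      refine (lintegral_iUnion_le _ _).trans (ENNReal.tsum_le_tsum fun k => ?_)
      exact ann ν x A s t h _ (by positivity)
    _ = _ := by
      rw [ENNReal.tsum_mul_left]
      have : ∀ k : ℕ, ENNReal.ofReal ((R * 2 * 2^k) ^ (s - t)) =
          ENNReal.ofReal (R ^ (s-t)) * ENNReal.ofReal (2 ^ (s-t)) * ENNReal.ofReal (((2:ℝ) ^ (-(t - s))) ^ k) := by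
        intro k
        rw [← ENNReal.ofReal_mul (by positivity), ← ENNReal.ofReal_mul (by positivity),
          Real.mul_rpow (by positivity) (by positivity), Real.mul_rpow (by positivity) (by positivity)]
        congr 2
        rw [← Real.rpow_natCast, ← Real.rpow_natCast, ← Real.rpow_mul (by norm_num),
          ← Real.rpow_mul (by norm_num)]
        congr 1; ring
      simp_rw [this]
      rw [ENNReal.tsum_mul_left]
      ring

lemma vol_ball_le (n : ℕ) (x : Euc n) (r : ℝ) (hr : 0 < r) :
    (volume (ball x r)) ≤ volume (ball (0 : Euc n) 1) * ENNReal.ofReal (r ^ (n:ℝ)) := by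
  rw [Measure.addHaar_ball_of_pos _ _ hr, finrank_euclideanSpace, Fintype.card_fin, Real.rpow_natCast,
    mul_comm]

lemma vol_ball_ne (n : ℕ) : volume (ball (0 : Euc n) 1) ≠ ⊤ := measure_ball_lt_top.ne

lemma rpow_cmp' (t d ρ : ℝ) (hd : 0 < d) (h1 : d / 2 ≤ ρ) (h2 : ρ ≤ 2 * d) :
    ENNReal.ofReal ρ ^ (-t) ≤ ENNReal.ofReal (2 ^ |t|) * ENNReal.ofReal d ^ (-t) := by
  rw [ENNReal.ofReal_rpow_of_pos hd]
  exact rpow_cmp t d ρ hd h1 h2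

lemma rpow_anti (t : ℝ) (ht : 0 ≤ t) (a b : ℝ≥0∞) (h : a ≤ b) : b ^ (-t) ≤ a ^ (-t) := by
  rw [ENNReal.rpow_neg, ENNReal.rpow_neg]
  exact ENNReal.inv_le_inv.2 (ENNReal.rpow_le_rpow h ht)

lemma kern_near (n : ℕ) (γ β : ℝ) (hγ : 0 < γ) (hβ : 0 < β) (hβn : β < n) : ∃ C : ℝ≥0∞, C ≠ ⊤ ∧
    ∀ (x z : Euc n) (R : ℝ), 0 < R →
    ∫⁻ y in ball x R, ENNReal.ofReal ‖x - y‖ ^ (-(n - γ)) * ENNReal.ofReal ‖y - z‖ ^ (-(n - β)) ≤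
      C * ENNReal.ofReal (R ^ γ) * ENNReal.ofReal ‖x - z‖ ^ (-(n - β)) := by
  have hn : (0:ℝ) < n := by linarith
  obtain ⟨C1, hC1, H1⟩ := near_int n n (n - γ) hn (by linarith)
  obtain ⟨C2, hC2, H2⟩ := near_int n n (n - β) hn (by linarith)
  set B := volume (ball (0 : Euc n) 1) with hB
  have hBt : B ≠ ⊤ := vol_ball_ne n
  refine ⟨C1 * B * ENNReal.ofReal (2 ^ |n - β|) +
    ENNReal.ofReal (2 ^ |n - γ|) * C2 * B * ENNReal.ofReal (2 ^ γ) + 1, ?_, ?_⟩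
  · finiteness
  intro x z R hR
  by_cases hxz : x = z
  · subst hxz
    have h1 : ENNReal.ofReal ‖x - x‖ ^ (-(n - β)) = ⊤ := by
      simp only [sub_self, norm_zero, ENNReal.ofReal_zero]
      exact ENNReal.zero_rpow_of_neg (by linarith)
    rw [h1, ENNReal.mul_top]
    · exact le_top
    · have : ENNReal.ofReal (R ^ γ) ≠ 0 := by
        simp only [ne_eq, ENNReal.ofReal_eq_zero, not_le]; positivity
      simp [this]
  have hd : 0 < ‖x - z‖ := norm_pos_iff.2 (sub_ne_zero.2 hxz)
  set d := ‖x - z‖ with hdd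
  rw [← lintegral_inter_add_sdiff _ _ (measurableSet_ball (x := z) (ε := d / 2)), ENNReal.ofReal_rpow_of_pos hd]
  have hA : ∫⁻ y in ball x R \ ball z (d / 2),
      ENNReal.ofReal ‖x - y‖ ^ (-(n - γ)) * ENNReal.ofReal ‖y - z‖ ^ (-(n - β)) ≤
      C1 * B * ENNReal.ofReal (2 ^ |n - β|) * ENNReal.ofReal (R ^ γ) * ENNReal.ofReal (d ^ (-(n - β))) := by
    calc _ ≤ ∫⁻ y in ball x R \ ball z (d / 2), ENNReal.ofReal ‖x - y‖ ^ (-(n - γ)) *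
        (ENNReal.ofReal (2 ^ |n - β|) * ENNReal.ofReal (d ^ (-(n - β)))) := by
          apply setLIntegral_mono (by fun_prop)
          intro y hy
          gcongr
          have h2 : d / 2 ≤ ‖y - z‖ := by
            have := hy.2
            rwa [mem_ball, dist_eq_norm, not_lt] at this
          exact (rpow_anti _ (by linarith) _ _ (ENNReal.ofReal_le_ofReal h2)).trans
            (rpow_cmp _ d (d/2) hd le_rfl (by linarith))
      _ ≤ ∫⁻ y in ball x R, ENNReal.ofReal ‖x - y‖ ^ (-(n - γ)) *
        (ENNReal.ofReal (2 ^ |n - β|) * ENNReal.ofReal (d ^ (-(n - β)))) :=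
          lintegral_mono_set sdiff_subset
      _ = (∫⁻ y in ball x R, ENNReal.ofReal ‖x - y‖ ^ (-(n - γ))) *
        (ENNReal.ofReal (2 ^ |n - β|) * ENNReal.ofReal (d ^ (-(n - β)))) :=
          lintegral_mul_const _ (by fun_prop)
      _ ≤ (C1 * B * ENNReal.ofReal (R ^ (n - (n - γ)))) *
        (ENNReal.ofReal (2 ^ |n - β|) * ENNReal.ofReal (d ^ (-(n - β)))) := by
          gcongr
          exact H1 volume x B hBt (fun r hr => vol_ball_le n x r hr) R hR
      _ = _ := by rw [_root_.sub_sub_cancel]; ring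
  have hB' : ∫⁻ y in ball x R ∩ ball z (d / 2),
      ENNReal.ofReal ‖x - y‖ ^ (-(n - γ)) * ENNReal.ofReal ‖y - z‖ ^ (-(n - β)) ≤
      ENNReal.ofReal (2 ^ |n - γ|) * C2 * B * ENNReal.ofReal (2 ^ γ) * ENNReal.ofReal (R ^ γ) *
        ENNReal.ofReal (d ^ (-(n - β))) := by
    by_cases hRd : R ≤ d / 2
    · have : ball x R ∩ ball z (d / 2) = ∅ := by
        rw [← disjoint_iff_inter_eq_empty]
        apply ball_disjoint_ball
        rw [dist_eq_norm]; linarith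
      rw [this]; simp
    push Not at hRd
    calc _ ≤ ∫⁻ y in ball x R ∩ ball z (d / 2),
        (ENNReal.ofReal (2 ^ |n - γ|) * ENNReal.ofReal (d ^ (-(n - γ)))) * ENNReal.ofReal ‖z - y‖ ^ (-(n - β)) := by
          apply setLIntegral_mono (by fun_prop)
          intro y hy
          have h2 : ‖z - y‖ < d / 2 := by
            have := hy.2
            rwa [mem_ball, dist_comm, dist_eq_norm] at this
          rw [norm_sub_rev y z]
          gcongr
          have h3 : d ≤ ‖x - y‖ + ‖z - y‖ := by
            rw [norm_sub_rev z y]; exact norm_sub_le_norm_sub_add_norm_sub _ _ _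
          have h4 : ‖x - y‖ ≤ d + ‖z - y‖ := norm_sub_le_norm_sub_add_norm_sub _ _ _
          exact rpow_cmp _ d _ hd (by linarith) (by linarith)
      _ ≤ ∫⁻ y in ball z (d / 2),
        (ENNReal.ofReal (2 ^ |n - γ|) * ENNReal.ofReal (d ^ (-(n - γ)))) * ENNReal.ofReal ‖z - y‖ ^ (-(n - β)) :=
          lintegral_mono_set inter_subset_right
      _ = (ENNReal.ofReal (2 ^ |n - γ|) * ENNReal.ofReal (d ^ (-(n - γ)))) *
          ∫⁻ y in ball z (d / 2), ENNReal.ofReal ‖z - y‖ ^ (-(n - β)) :=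
          lintegral_const_mul _ (by fun_prop)
      _ ≤ (ENNReal.ofReal (2 ^ |n - γ|) * ENNReal.ofReal (d ^ (-(n - γ)))) *
          (C2 * B * ENNReal.ofReal ((d / 2) ^ (n - (n - β)))) := by
          gcongr
          exact H2 volume z B hBt (fun r hr => vol_ball_le n z r hr) _ (by positivity)
      _ = ENNReal.ofReal (2 ^ |n - γ|) * C2 * B *
          ENNReal.ofReal (d ^ (-(n - γ)) * (d / 2) ^ (n - (n - β))) := by
          rw [ENNReal.ofReal_mul (by positivity)]; ring
      _ ≤ ENNReal.ofReal (2 ^ |n - γ|) * C2 * B *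
          ENNReal.ofReal (2 ^ γ * R ^ γ * d ^ (-(n - β))) := by
          gcongr _ * ENNReal.ofReal ?_
          rw [_root_.sub_sub_cancel]
          calc d ^ (-(n - γ)) * (d / 2) ^ β ≤ d ^ (-(n - γ)) * d ^ β := by
                gcongr; linarith
            _ = d ^ γ * d ^ (-(n - β)) := by
                rw [← Real.rpow_add hd, ← Real.rpow_add hd]; congr 1; ring
            _ ≤ (2 * R) ^ γ * d ^ (-(n - β)) := by
                gcongr; linarith
            _ = _ := by rw [Real.mul_rpow (by norm_num) hR.le]
      _ = _ := by
          rw [ENNReal.ofReal_mul (by positivity), ENNReal.ofReal_mul (by positivity)]; ring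
  refine (add_le_add hB' hA).trans ?_
  rw [add_mul, add_mul, add_mul, add_mul, add_comm]
  exact le_self_add

lemma meas_kern (n : ℕ) (t : ℝ) :
    Measurable (fun q : Euc n × Euc n => ENNReal.ofReal ‖q.1 - q.2‖ ^ t) := by fun_prop

lemma meas_pot (n : ℕ) (t : ℝ) (μ : Measure (Euc n)) [SFinite μ] :
    Measurable (fun y : Euc n => ∫⁻ z, ENNReal.ofReal ‖y - z‖ ^ t ∂μ) :=
  (meas_kern n t).lintegral_prod_right'

lemma U_near (n : ℕ) (γ β : ℝ) (hγ : 0 < γ) (hβ : 0 < β) (hβn : β < n) : ∃ C : ℝ≥0∞, C ≠ ⊤ ∧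
    ∀ (μ : Measure (Euc n)) [SFinite μ] (x : Euc n) (R : ℝ), 0 < R →
    ∫⁻ y in ball x R, ENNReal.ofReal ‖x - y‖ ^ (-(n - γ)) *
        ∫⁻ z, ENNReal.ofReal ‖y - z‖ ^ (-(n - β)) ∂μ ≤
      C * ENNReal.ofReal (R ^ γ) * ∫⁻ z, ENNReal.ofReal ‖x - z‖ ^ (-(n - β)) ∂μ := by
  obtain ⟨C, hC, H⟩ := kern_near n γ β hγ hβ hβn
  refine ⟨C, hC, ?_⟩
  intro μ _ x R hR
  calc _ = ∫⁻ y in ball x R, ∫⁻ z, ENNReal.ofReal ‖x - y‖ ^ (-(n - γ)) *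
        ENNReal.ofReal ‖y - z‖ ^ (-(n - β)) ∂μ := by
        refine lintegral_congr fun y => ?_
        rw [lintegral_const_mul _ (by fun_prop)]
    _ = ∫⁻ z, (∫⁻ y in ball x R, ENNReal.ofReal ‖x - y‖ ^ (-(n - γ)) *
        ENNReal.ofReal ‖y - z‖ ^ (-(n - β))) ∂μ := by
        apply lintegral_lintegral_swap
        apply Measurable.aemeasurable
        fun_prop
    _ ≤ ∫⁻ z, C * ENNReal.ofReal (R ^ γ) * ENNReal.ofReal ‖x - z‖ ^ (-(n - β)) ∂μ :=
        lintegral_mono fun z => H x z R hR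
    _ = _ := lintegral_const_mul _ (by fun_prop)

lemma U_ball (n : ℕ) (a β : ℝ) (hβ : 0 < β) (hβn : β < n) (hβa : β < a) : ∃ C : ℝ≥0∞, C ≠ ⊤ ∧
    ∀ (μ : Measure (Euc n)) [SFinite μ] (A : ℝ≥0∞),
    (∀ x, ∀ r > 0, μ (ball x r) ≤ A * ENNReal.ofReal (r ^ (n - a))) → ∀ (x : Euc n) (r : ℝ), 0 < r →
    ∫⁻ y in ball x r, ∫⁻ z, ENNReal.ofReal ‖y - z‖ ^ (-(n - β)) ∂μ ≤
      C * A * ENNReal.ofReal (r ^ (n - a + β)) := by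
  have hn : (0:ℝ) < n := by linarith
  obtain ⟨C2, hC2, H2⟩ := near_int n n (n - β) hn (by linarith)
  obtain ⟨C3, hC3, H3⟩ := far_int n (n - a) (n - β) (by linarith)
  set B := volume (ball (0 : Euc n) 1) with hB
  have hBt : B ≠ ⊤ := vol_ball_ne n
  refine ⟨C2 * B * ENNReal.ofReal (3 ^ β * 2 ^ (n - a)) +
    B * ENNReal.ofReal (2 ^ |n - β|) * C3 * ENNReal.ofReal (2 ^ (β - a)), by finiteness, ?_⟩
  intro μ _ A hμ x r hr
  rw [lintegral_lintegral_swap (by apply Measurable.aemeasurable; fun_prop),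
    ← lintegral_add_compl _ (measurableSet_ball (x := x) (ε := 2 * r)), add_mul, add_mul]
  refine add_le_add ?_ ?_
  · calc _ ≤ ∫⁻ z in ball x (2 * r), C2 * B * ENNReal.ofReal ((3 * r) ^ β) ∂μ := by
          apply setLIntegral_mono measurable_const
          intro z hz
          have hsub : ball x r ⊆ ball z (3 * r) := by
            apply ball_subset_ball'
            rw [mem_ball, dist_comm] at hz; linarith
          refine (lintegral_mono_set hsub).trans ?_
          have := H2 volume z B hBt (fun r hr => vol_ball_le n z r hr) (3 * r) (by positivity)
          rw [_root_.sub_sub_cancel] at this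
          simp_rw [norm_sub_rev _ z]
          exact this
      _ = C2 * B * ENNReal.ofReal ((3 * r) ^ β) * μ (ball x (2 * r)) := setLIntegral_const _ _
      _ ≤ C2 * B * ENNReal.ofReal ((3 * r) ^ β) * (A * ENNReal.ofReal ((2 * r) ^ (n - a))) := by
          gcongr
          exact hμ x _ (by positivity)
      _ = C2 * B * A * ENNReal.ofReal ((3 * r) ^ β * (2 * r) ^ (n - a)) := by
          rw [ENNReal.ofReal_mul (by positivity)]; ring
      _ = C2 * B * A * ENNReal.ofReal (3 ^ β * 2 ^ (n - a) * r ^ (n - a + β)) := by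
          congr 2
          rw [Real.mul_rpow (by norm_num) hr.le, Real.mul_rpow (by norm_num) hr.le, Real.rpow_add hr]
          ring
      _ = _ := by
          rw [ENNReal.ofReal_mul (by positivity)]; ring
  · calc _ ≤ ∫⁻ z in (ball x (2 * r))ᶜ, B * ENNReal.ofReal (r ^ (n:ℝ)) * (ENNReal.ofReal (2 ^ |n - β|)) *
          ENNReal.ofReal ‖x - z‖ ^ (-(n - β)) ∂μ := by
          apply setLIntegral_mono (by fun_prop)
          intro z hz
          rw [mem_compl_iff, mem_ball, dist_comm, dist_eq_norm, not_lt] at hz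
          calc _ ≤ ∫⁻ y in ball x r, ENNReal.ofReal (2 ^ |n - β|) * ENNReal.ofReal ‖x - z‖ ^ (-(n - β)) := by
                apply setLIntegral_mono measurable_const
                intro y hy
                rw [mem_ball, dist_comm, dist_eq_norm] at hy
                have h3 : ‖x - z‖ ≤ ‖x - y‖ + ‖y - z‖ := norm_sub_le_norm_sub_add_norm_sub _ _ _
                have h4 : ‖y - z‖ ≤ ‖x - y‖ + ‖x - z‖ := by
                  rw [norm_sub_rev x y]; exact norm_sub_le_norm_sub_add_norm_sub _ _ _
                exact rpow_cmp' _ _ _ (by linarith) (by linarith) (by linarith)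
            _ = ENNReal.ofReal (2 ^ |n - β|) * ENNReal.ofReal ‖x - z‖ ^ (-(n - β)) * volume (ball x r) :=
                setLIntegral_const _ _
            _ ≤ ENNReal.ofReal (2 ^ |n - β|) * ENNReal.ofReal ‖x - z‖ ^ (-(n - β)) * (B * ENNReal.ofReal (r ^ (n:ℝ))) := by
                gcongr
                exact vol_ball_le n x r hr
            _ = _ := by ring
      _ = B * ENNReal.ofReal (r ^ (n:ℝ)) * (ENNReal.ofReal (2 ^ |n - β|)) *
          ∫⁻ z in (ball x (2 * r))ᶜ, ENNReal.ofReal ‖x - z‖ ^ (-(n - β)) ∂μ :=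
          lintegral_const_mul _ (by fun_prop)
      _ ≤ B * ENNReal.ofReal (r ^ (n:ℝ)) * (ENNReal.ofReal (2 ^ |n - β|)) *
          (C3 * A * ENNReal.ofReal ((2 * r) ^ (n - a - (n - β)))) := by
          gcongr
          exact H3 μ x A (hμ x) _ (by positivity)
      _ = B * (ENNReal.ofReal (2 ^ |n - β|)) * C3 * A *
          ENNReal.ofReal (r ^ (n:ℝ) * (2 * r) ^ (n - a - (n - β))) := by
          rw [ENNReal.ofReal_mul (by positivity)]; ring
      _ = B * (ENNReal.ofReal (2 ^ |n - β|)) * C3 * A *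
          ENNReal.ofReal (2 ^ (β - a) * r ^ (n - a + β)) := by
          congr 2
          rw [Real.mul_rpow (by norm_num) hr.le, mul_left_comm, ← Real.rpow_add hr]
          congr 2 <;> ring
      _ = _ := by
          rw [ENNReal.ofReal_mul (by positivity)]; ring

lemma cube_vol (n : ℕ) (a : Fin n → ℝ) (s : ℝ) (hs : 0 < s) :
    volume (cube a s) = ENNReal.ofReal (s ^ (n:ℝ)) := by
  have h : cube a s = (WithLp.ofLp : Euc n → Fin n → ℝ) ⁻¹' (Icc a (fun i => a i + s)) := by
    ext x
    simp only [cube, mem_ofPred_eq, mem_preimage, mem_Icc, Pi.le_def]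
    exact forall_and
  rw [h, (PiLp.volume_preserving_ofLp (Fin n)).measure_preimage measurableSet_Icc.nullMeasurableSet,
    Real.volume_Icc_pi]
  simp [ENNReal.ofReal_pow hs.le]

lemma morrey_ball (n : ℕ) (hn : 1 ≤ n) (α p : ℝ) (hp1 : 1 < p) (w : Euc n → ℝ)
    (x : Euc n) (r : ℝ) (hr : 0 < r) :
    (volume.withDensity (fun y => ENNReal.ofReal (w y ^ p))) (ball x r) ≤
      (morrey n α p w ^ p * ENNReal.ofReal (2 ^ (n - α * p))) * ENNReal.ofReal (r ^ (n - α * p)) := by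
  have hn0 : (0:ℝ) < n := by exact_mod_cast hn
  have hp0 : 0 < p := by linarith
  set a : Fin n → ℝ := fun i => x i - r
  have hsub : ball x r ⊆ cube a (2 * r) := by
    intro y hy i
    rw [mem_ball, dist_eq_norm] at hy
    have h1 := (PiLp.norm_apply_le (y - x) i).trans_lt hy
    simp only [PiLp.sub_apply, Real.norm_eq_abs, abs_lt] at h1
    constructor <;> simp only [a] <;> linarith [h1.1, h1.2]
  have hM : volume (cube a (2 * r)) ^ (α / n) *
      ((volume (cube a (2 * r)))⁻¹ * ∫⁻ y in cube a (2 * r), ENNReal.ofReal (w y ^ p)) ^ (1 / p) ≤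
      morrey n α p w := by
    unfold morrey
    exact le_iSup_of_le a (le_iSup_of_le (2 * r) (le_iSup_of_le (by positivity) le_rfl))
  rw [withDensity_apply _ measurableSet_ball]
  refine (lintegral_mono_set hsub).trans ?_
  set J := ∫⁻ y in cube a (2 * r), ENNReal.ofReal (w y ^ p)
  rw [cube_vol n a _ (by positivity)] at hM
  have hM2 := ENNReal.rpow_le_rpow hM hp0.le
  rw [ENNReal.mul_rpow_of_nonneg _ _ hp0.le, ← ENNReal.rpow_mul, ← ENNReal.rpow_mul,
    one_div_mul_cancel hp0.ne', ENNReal.rpow_one, ENNReal.ofReal_rpow_of_pos (by positivity),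
    ← ENNReal.ofReal_inv_of_pos (by positivity), ← mul_assoc, ← ENNReal.ofReal_mul (by positivity)] at hM2
  have e : ((2 * r) ^ (n:ℝ)) ^ (α / n * p) * ((2 * r) ^ (n:ℝ))⁻¹ = ((2 * r) ^ (n - α * p))⁻¹ := by
    rw [← Real.rpow_mul (by positivity), ← Real.rpow_neg (by positivity), ← Real.rpow_neg (by positivity),
      ← Real.rpow_add (by positivity)]
    congr 1; field_simp; ring
  rw [e] at hM2
  calc J = ENNReal.ofReal ((2 * r) ^ (n - α * p)) * (ENNReal.ofReal ((2 * r) ^ (n - α * p))⁻¹ * J) := by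
        rw [← mul_assoc, ← ENNReal.ofReal_mul (by positivity), mul_inv_cancel₀ (by positivity)]
        simp
    _ ≤ ENNReal.ofReal ((2 * r) ^ (n - α * p)) * morrey n α p w ^ p := by gcongr
    _ = _ := by
        rw [Real.mul_rpow (by norm_num) hr.le, ENNReal.ofReal_mul (by positivity)]; ring

lemma ae_ne_pt (n : ℕ) (hn : 1 ≤ n) (x : Euc n) : ∀ᵐ y : Euc n, y ≠ x := by
  have : Nonempty (Fin n) := ⟨⟨0, hn⟩⟩
  have : volume ({x} : Set (Euc n)) = 0 := measure_singleton x
  exact measure_eq_zero_iff_ae_notMem.1 this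

lemma holderK (n : ℕ) (hn : 1 ≤ n) (p t1 t2 t : ℝ) (hp : 1 < p) (ht : t1 / p + t2 * (1 - 1 / p) = t)
    (v U : Euc n → ℝ≥0∞) (hv : Measurable v) (hU : Measurable U) (x : Euc n) (S : Set (Euc n)) :
    ∫⁻ y in S, ENNReal.ofReal ‖x - y‖ ^ (-t) * (v y * U y ^ (1 - 1 / p)) ≤
      (∫⁻ y in S, v y ^ p * ENNReal.ofReal ‖x - y‖ ^ (-t1)) ^ (1 / p) *
      (∫⁻ y in S, U y * ENNReal.ofReal ‖x - y‖ ^ (-t2)) ^ (1 - 1 / p) := by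
  have hp0 : 0 < p := by linarith
  have hq : 0 < 1 - 1 / p := by
    have : 1 / p < 1 := (div_lt_one hp0).2 hp
    linarith
  have hpq : p.HolderConjugate (1 / (1 - 1/p)) := by
    rw [Real.holderConjugate_iff]
    refine ⟨hp, ?_⟩
    simp
  have H := ENNReal.lintegral_mul_le_Lp_mul_Lq (volume.restrict S) hpq
    (f := fun y => v y * ENNReal.ofReal ‖x - y‖ ^ (-t1 / p))
    (g := fun y => U y ^ (1 - 1/p) * ENNReal.ofReal ‖x - y‖ ^ (-t2 * (1 - 1/p)))
    (by fun_prop) (by fun_prop)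
  rw [one_div_one_div] at H
  refine (le_trans (le_of_eq ?_) H).trans (le_of_eq ?_)
  · apply lintegral_congr_ae
    filter_upwards [ae_restrict_of_ae (ae_ne_pt n hn x)] with y hy
    have hd : 0 < ‖x - y‖ := norm_pos_iff.2 (sub_ne_zero.2 (Ne.symm hy))
    have : ENNReal.ofReal ‖x - y‖ ^ (-t) =
        ENNReal.ofReal ‖x - y‖ ^ (-t1 / p) * ENNReal.ofReal ‖x - y‖ ^ (-t2 * (1 - 1/p)) := by
      rw [← ENNReal.rpow_add _ _ (by simpa using sub_ne_zero.2 (Ne.symm hy)) ENNReal.ofReal_ne_top, ← ht]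
      congr 1; ring
    simp only [Pi.mul_apply]
    rw [this]; ring
  · congr 2
    · refine lintegral_congr fun y => ?_
      rw [ENNReal.mul_rpow_of_nonneg _ _ hp0.le, ← ENNReal.rpow_mul, div_mul_cancel₀ _ hp0.ne']
    · refine lintegral_congr fun y => ?_
      rw [ENNReal.mul_rpow_of_nonneg _ _ (by positivity), ← ENNReal.rpow_mul, ← ENNReal.rpow_mul,
        mul_assoc, mul_one_div_cancel hq.ne', ENNReal.rpow_one, mul_one]

lemma star (n : ℕ) (hn : 1 ≤ n) (α p : ℝ) (hα0 : 0 < α) (hp1 : 1 < p) (hpn : α * p ≤ n) :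
    ∃ C : ℝ≥0∞, C ≠ ⊤ ∧ ∀ (v : Euc n → ℝ≥0∞), Measurable v → ∀ A : ℝ≥0∞, A ≠ 0 → A ≠ ⊤ →
    (∀ x, ∀ r > 0, (volume.withDensity (fun y => v y ^ p)) (ball x r) ≤ A * ENNReal.ofReal (r ^ (n - α * p))) →
    ∀ U : Euc n → ℝ≥0∞, (U = fun y => ∫⁻ z, ENNReal.ofReal ‖y - z‖ ^ (-(n - α * p / 2))
      ∂(volume.withDensity (fun y => v y ^ p))) → ∀ x, U x ≠ 0 → U x ≠ ⊤ →
    ∫⁻ y, ENNReal.ofReal ‖x - y‖ ^ (-(n - α)) * (v y * U y ^ (1 - 1 / p)) ≤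
      C * A ^ (1 / p) * U x ^ (1 - 1 / p) := by
  have hn0 : (0:ℝ) < n := by exact_mod_cast hn
  have hp0 : 0 < p := by linarith
  have hp1' : 0 < p - 1 := by linarith
  have hq : 0 < 1 - 1 / p := by
    have : 1 / p < 1 := (div_lt_one hp0).2 hp1
    linarith
  have ha : 0 < α * p := by positivity
  obtain ⟨C1, hC1, H1⟩ := U_near n (α * p / (2 * (p - 1))) (α * p / 2) (by positivity) (by positivity) (by linarith)
  obtain ⟨C2, hC2, H2⟩ := U_ball n (α * p) (α * p / 2) (by positivity) (by linarith) (by linarith)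
  obtain ⟨C3, hC3, H3⟩ := far_int n (n - α * p) (n - α * p + (p - 1) * (α * p) / 4)
    (by nlinarith [mul_pos hp1' ha])
  obtain ⟨C4, hC4, H4⟩ := far_int n (n - α * p + α * p / 2) (n - α * p / 4) (by linarith)
  refine ⟨C1 ^ (1 - 1 / p) + C3 ^ (1 / p) * (C4 * C2) ^ (1 - 1 / p), by finiteness, ?_⟩
  intro v hv A hA0 hAt hμ U hU x hx0 hxt
  set μ := volume.withDensity (fun y => v y ^ p) with hμd
  have hUm : Measurable U := by rw [hU]; exact meas_pot n _ μ
  have hvp : Measurable (fun y => v y ^ p) := by fun_prop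
  obtain ⟨b, hb⟩ : ∃ b : ℝ, A = ENNReal.ofReal (Real.exp b) := by
    refine ⟨Real.log A.toReal, ?_⟩
    rw [Real.exp_log (ENNReal.toReal_pos hA0 hAt), ENNReal.ofReal_toReal hAt]
  obtain ⟨c, hc⟩ : ∃ c : ℝ, U x = ENNReal.ofReal (Real.exp c) := by
    refine ⟨Real.log (U x).toReal, ?_⟩
    rw [Real.exp_log (ENNReal.toReal_pos hx0 hxt), ENNReal.ofReal_toReal hxt]
  set R := Real.exp ((b - c) * (2 / (α * p))) with hR
  have hR0 : 0 < R := Real.exp_pos _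
  have rp : ∀ y z : ℝ, ENNReal.ofReal (Real.exp y) ^ z = ENNReal.ofReal (Real.exp (y * z)) := by
    intro y z
    rw [ENNReal.ofReal_rpow_of_pos (Real.exp_pos _), Real.exp_mul]
  have ml : ∀ y z : ℝ, ENNReal.ofReal (Real.exp y) * ENNReal.ofReal (Real.exp z) =
      ENNReal.ofReal (Real.exp (y + z)) := by
    intro y z
    rw [← ENNReal.ofReal_mul (Real.exp_pos _).le, Real.exp_add]
  have wd : ∀ S : Set (Euc n), MeasurableSet S → ∀ t : ℝ,
      ∫⁻ y in S, v y ^ p * ENNReal.ofReal ‖x - y‖ ^ (-t) = ∫⁻ y in S, ENNReal.ofReal ‖x - y‖ ^ (-t) ∂μ := by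
    intro S hS t
    rw [hμd, setLIntegral_withDensity_eq_setLIntegral_mul _ hvp (by fun_prop) hS]
    rfl
  have hnear : ∫⁻ y in ball x R, ENNReal.ofReal ‖x - y‖ ^ (-(n - α)) * (v y * U y ^ (1 - 1 / p)) ≤
      C1 ^ (1 - 1 / p) * (A ^ (1 / p) * U x ^ (1 - 1 / p)) := by
    refine (holderK n hn p (n - α * p / 2) (n - α * p / (2 * (p - 1))) (n - α) hp1 (by field_simp; ring)
      v U hv hUm x _).trans ?_
    rw [wd _ measurableSet_ball]
    have h1 : ∫⁻ y in ball x R, ENNReal.ofReal ‖x - y‖ ^ (-(n - α * p / 2)) ∂μ ≤ U x := by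
      rw [hU]; exact setLIntegral_le_lintegral _ _
    have h2 : ∫⁻ y in ball x R, U y * ENNReal.ofReal ‖x - y‖ ^ (-(n - α * p / (2 * (p - 1)))) ≤
        C1 * (ENNReal.ofReal (R ^ (α * p / (2 * (p - 1)))) * U x) := by
      have := H1 μ x R hR0
      rw [← mul_assoc]
      simp_rw [mul_comm (U _)]
      rw [hU]
      exact this
    calc _ ≤ U x ^ (1 / p) * (C1 * (ENNReal.ofReal (R ^ (α * p / (2 * (p - 1)))) * U x)) ^ (1 - 1 / p) := by
          gcongr
      _ = C1 ^ (1 - 1 / p) * (U x ^ (1 / p) * (ENNReal.ofReal (R ^ (α * p / (2 * (p - 1)))) * U x) ^ (1 - 1 / p)) := by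
          rw [ENNReal.mul_rpow_of_nonneg _ _ hq.le]; ring
      _ = _ := by
          congr 1
          rw [hR, hb, hc, ← Real.exp_mul, ml, rp, rp, rp, rp, ml, ml]
          congr 2
          field_simp; ring
  have hfar : ∫⁻ y in (ball x R)ᶜ, ENNReal.ofReal ‖x - y‖ ^ (-(n - α)) * (v y * U y ^ (1 - 1 / p)) ≤
      C3 ^ (1 / p) * (C4 * C2) ^ (1 - 1 / p) * (A ^ (1 / p) * U x ^ (1 - 1 / p)) := by
    refine (holderK n hn p (n - α * p + (p - 1) * (α * p) / 4) (n - α * p / 4) (n - α) hp1 (by field_simp; ring)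
      v U hv hUm x _).trans ?_
    rw [wd _ measurableSet_ball.compl]
    have h1 := H3 μ x A (hμ x) R hR0
    have h2 := H4 (volume.withDensity U) x (C2 * A) (by
      intro r hr
      rw [withDensity_apply _ measurableSet_ball, hU]
      exact H2 μ A hμ x r hr) R hR0
    rw [setLIntegral_withDensity_eq_setLIntegral_mul _ hUm (by fun_prop) measurableSet_ball.compl] at h2
    simp only [Pi.mul_apply] at h2
    calc _ ≤ (C3 * A * ENNReal.ofReal (R ^ (n - α * p - (n - α * p + (p - 1) * (α * p) / 4)))) ^ (1 / p) *
          (C4 * (C2 * A) * ENNReal.ofReal (R ^ (n - α * p + α * p / 2 - (n - α * p / 4)))) ^ (1 - 1 / p) := by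
          gcongr
      _ = (C3 * (A * ENNReal.ofReal (R ^ (n - α * p - (n - α * p + (p - 1) * (α * p) / 4))))) ^ (1 / p) *
          (C4 * C2 * (A * ENNReal.ofReal (R ^ (n - α * p + α * p / 2 - (n - α * p / 4))))) ^ (1 - 1 / p) := by
          simp only [mul_assoc]
      _ = C3 ^ (1 / p) * (C4 * C2) ^ (1 - 1 / p) *
          ((A * ENNReal.ofReal (R ^ (n - α * p - (n - α * p + (p - 1) * (α * p) / 4)))) ^ (1 / p) *
          (A * ENNReal.ofReal (R ^ (n - α * p + α * p / 2 - (n - α * p / 4)))) ^ (1 - 1 / p)) := by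
          rw [ENNReal.mul_rpow_of_nonneg C3 _ (by positivity), ENNReal.mul_rpow_of_nonneg (C4 * C2) _ hq.le]
          ring
      _ = _ := by
          congr 1
          rw [hR, hb, hc, ← Real.exp_mul, ← Real.exp_mul, ml, ml, rp, rp, rp, rp, ml, ml]
          congr 2
          field_simp; ring
  rw [← lintegral_add_compl _ (measurableSet_ball (x := x) (ε := R)), mul_assoc, add_mul]
  exact add_le_add hnear hfar

lemma schur (n : ℕ) (t : ℝ) (D : ℝ≥0∞) (v φ F : Euc n → ℝ≥0∞)
    (hv : Measurable v) (hφ : Measurable φ) (hF : Measurable F)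
    (hstar : ∀ x, ∫⁻ y, ENNReal.ofReal ‖x - y‖ ^ t * (v y * φ y) ≤ D * φ x)
    (hvt : ∀ y, v y ≠ ⊤) (hφ0 : ∀ y, φ y ≠ 0) (hφt : ∀ᵐ y, φ y ≠ ⊤)
    (hFv : ∀ᵐ y, v y = 0 → F y = 0) :
    ∫⁻ x, (∫⁻ y, ENNReal.ofReal ‖x - y‖ ^ t * F y) ^ (2:ℝ) * v x ≤
      D ^ (2:ℝ) * ∫⁻ y, F y ^ (2:ℝ) * (v y)⁻¹ := by
  set h : Euc n → ℝ≥0∞ := fun y => F y ^ (2:ℝ) * (v y)⁻¹ * (φ y)⁻¹ with hh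
  have hhm : Measurable h := by fun_prop
  have key : ∀ x, (∫⁻ y, ENNReal.ofReal ‖x - y‖ ^ t * F y) ^ (2:ℝ) ≤
      D * φ x * ∫⁻ y, ENNReal.ofReal ‖x - y‖ ^ t * h y := by
    intro x
    have H := ENNReal.lintegral_mul_le_Lp_mul_Lq (volume : Measure (Euc n)) Real.HolderConjugate.two_two
      (f := fun y => (ENNReal.ofReal ‖x - y‖ ^ t * (v y * φ y)) ^ (1/2 : ℝ))
      (g := fun y => (ENNReal.ofReal ‖x - y‖ ^ t * h y) ^ (1/2 : ℝ))
      (by fun_prop) (by fun_prop)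
    have e : ∀ z : ℝ≥0∞, (z ^ (1/2:ℝ)) ^ (2:ℝ) = z := by
      intro z; rw [← ENNReal.rpow_mul]; norm_num
    simp only [e, Pi.mul_apply] at H
    have H2 : ∫⁻ y, ENNReal.ofReal ‖x - y‖ ^ t * F y ≤
        ∫⁻ y, (ENNReal.ofReal ‖x - y‖ ^ t * (v y * φ y)) ^ (1/2 : ℝ) *
          (ENNReal.ofReal ‖x - y‖ ^ t * h y) ^ (1/2 : ℝ) := by
      apply lintegral_mono_ae
      filter_upwards [hφt, hFv] with y h1 h2
      by_cases hv0 : v y = 0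
      · simp [h2 hv0]
      apply le_of_eq
      rw [← ENNReal.mul_rpow_of_nonneg _ _ (by norm_num)]
      have : ENNReal.ofReal ‖x - y‖ ^ t * (v y * φ y) * (ENNReal.ofReal ‖x - y‖ ^ t * h y) =
          (ENNReal.ofReal ‖x - y‖ ^ t * F y) ^ (2:ℝ) := by
        calc _ = (ENNReal.ofReal ‖x - y‖ ^ t) ^ 2 * F y ^ (2:ℝ) * (v y * (v y)⁻¹) * (φ y * (φ y)⁻¹) := by
              simp only [hh]; ring
          _ = _ := by
              rw [ENNReal.mul_inv_cancel hv0 (hvt y), ENNReal.mul_inv_cancel (hφ0 y) h1, mul_one, mul_one,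
                ENNReal.mul_rpow_of_nonneg _ _ (by norm_num), ENNReal.rpow_two (ENNReal.ofReal _ ^ t)]
      rw [this, ← ENNReal.rpow_mul]; norm_num
    calc _ ≤ ((∫⁻ y, ENNReal.ofReal ‖x - y‖ ^ t * (v y * φ y)) ^ (1/2:ℝ) *
          (∫⁻ y, ENNReal.ofReal ‖x - y‖ ^ t * h y) ^ (1/2:ℝ)) ^ (2:ℝ) := by
          gcongr
          exact H2.trans H
      _ = (∫⁻ y, ENNReal.ofReal ‖x - y‖ ^ t * (v y * φ y)) * ∫⁻ y, ENNReal.ofReal ‖x - y‖ ^ t * h y := by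
          rw [ENNReal.mul_rpow_of_nonneg _ _ (by norm_num), e, e]
      _ ≤ _ := by
          gcongr
          exact hstar x
  calc _ ≤ ∫⁻ x, D * ∫⁻ y, v x * φ x * (ENNReal.ofReal ‖x - y‖ ^ t * h y) := by
        refine lintegral_mono fun x => ?_
        rw [lintegral_const_mul _ (by fun_prop)]
        calc _ ≤ _ := mul_le_mul_left (key x) (v x)
          _ = _ := by ring
    _ = D * ∫⁻ x, ∫⁻ y, v x * φ x * (ENNReal.ofReal ‖x - y‖ ^ t * h y) := by
        apply lintegral_const_mul
        apply Measurable.lintegral_prod_right' (f := fun q : Euc n × Euc n =>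
          v q.1 * φ q.1 * (ENNReal.ofReal ‖q.1 - q.2‖ ^ t * h q.2))
        fun_prop
    _ = D * ∫⁻ y, ∫⁻ x, v x * φ x * (ENNReal.ofReal ‖x - y‖ ^ t * h y) := by
        rw [lintegral_lintegral_swap]
        apply Measurable.aemeasurable
        fun_prop
    _ ≤ D * ∫⁻ y, D * (F y ^ (2:ℝ) * (v y)⁻¹) := by
        gcongr with y
        calc _ = ∫⁻ x, h y * (ENNReal.ofReal ‖y - x‖ ^ t * (v x * φ x)) := by
              refine lintegral_congr fun x => ?_
              rw [norm_sub_rev]; ring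
          _ = h y * ∫⁻ x, (ENNReal.ofReal ‖y - x‖ ^ t * (v x * φ x)) :=
              lintegral_const_mul _ (by fun_prop)
          _ ≤ h y * (D * φ y) := by gcongr; exact hstar y
          _ = D * (F y ^ (2:ℝ) * (v y)⁻¹) * (φ y * (φ y)⁻¹) := by simp only [hh]; ring
          _ ≤ D * (F y ^ (2:ℝ) * (v y)⁻¹) * 1 := by gcongr; exact ENNReal.mul_inv_le_one _
          _ = _ := mul_one _
    _ = _ := by
        rw [lintegral_const_mul _ (by fun_prop), ENNReal.rpow_two]; ring

/-- Two-weight estimate: `‖I_α f‖_{L²(w)} ≤ C ‖w‖_{𝓛^{α,p}} ‖f‖_{L²(w⁻¹)}`. -/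
theorem riesz_two_weight (n : ℕ) (hn : 1 ≤ n) (α p : ℝ) (hα0 : 0 < α) (hαn : α < n)
    (hp1 : 1 < p) (hpn : p ≤ n / α) :
    ∃ C : ℝ≥0∞, 0 < C ∧ C < ⊤ ∧ ∀ w : Euc n → ℝ, 0 ≤ w → Measurable w →
      morrey n α p w ≠ ⊤ → ∀ f : Euc n → ℝ, Measurable f →
      (∫⁻ x, rieszE α (fun y => (‖f y‖₊ : ℝ≥0∞)) x ^ (2 : ℝ) *
          ENNReal.ofReal (w x)) ^ (1 / 2 : ℝ) ≤
        C * morrey n α p w *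
          (∫⁻ x, (‖f x‖₊ : ℝ≥0∞) ^ (2 : ℝ) * (ENNReal.ofReal (w x))⁻¹) ^ (1 / 2 : ℝ) := by
  have hn0 : (0:ℝ) < n := by exact_mod_cast hn
  have hp0 : 0 < p := by linarith
  have hq : 0 < 1 - 1 / p := by
    have : 1 / p < 1 := (div_lt_one hp0).2 hp1
    linarith
  have ha : α * p ≤ n := by rw [le_div_iff₀ hα0] at hpn; linarith
  have ha0 : 0 < α * p := by positivity
  obtain ⟨C, hC, H⟩ := star n hn α p hα0 hp1 ha
  obtain ⟨C2, hC2, H2⟩ := U_ball n (α * p) (α * p / 2) (by positivity) (by linarith) (by linarith)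
  have hE0 : ENNReal.ofReal (2 ^ (n - α * p)) ≠ 0 := by
    simp only [ne_eq, ENNReal.ofReal_eq_zero, not_le]; positivity
  have hE0' : 0 < ENNReal.ofReal (2 ^ (n - α * p)) ^ (1 / p) :=
    ENNReal.rpow_pos (pos_iff_ne_zero.2 hE0) ENNReal.ofReal_ne_top
  refine ⟨(C + 1) * ENNReal.ofReal (2 ^ (n - α * p)) ^ (1 / p), ?_, ?_, ?_⟩
  · exact ENNReal.mul_pos (by simp) hE0'.ne'
  · exact (by finiteness : (C + 1) * ENNReal.ofReal (2 ^ (n - α * p)) ^ (1 / p) ≠ ⊤).lt_top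
  intro w hw hwm hM f hf
  set M := morrey n α p w with hMd
  set v : Euc n → ℝ≥0∞ := fun y => ENNReal.ofReal (w y) with hvd
  have hv : Measurable v := by fun_prop
  have hvp : (fun y => ENNReal.ofReal (w y ^ p)) = fun y => v y ^ p := by
    funext y
    rw [hvd, ENNReal.ofReal_rpow_of_nonneg (hw y) hp0.le]
  have hμ : ∀ (x : Euc n), ∀ r > 0, (volume.withDensity (fun y => v y ^ p)) (ball x r) ≤
      (M ^ p * ENNReal.ofReal (2 ^ (n - α * p))) * ENNReal.ofReal (r ^ (n - α * p)) := by
    intro x r hr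
    rw [← hvp]
    exact morrey_ball n hn α p hp1 w x r hr
  set A := M ^ p * ENNReal.ofReal (2 ^ (n - α * p)) with hAd
  set μ := volume.withDensity (fun y => v y ^ p) with hμd
  by_cases hμ0 : μ = 0
  · have h1 : ∀ᵐ y, v y = 0 := by
      rw [hμd, withDensity_eq_zero_iff (by fun_prop)] at hμ0
      filter_upwards [hμ0] with y hy
      simpa [hp0, hp0.not_gt] using hy
    have h2 : ∫⁻ x, rieszE α (fun y => (‖f y‖₊ : ℝ≥0∞)) x ^ (2 : ℝ) * v x = 0 := by
      rw [lintegral_congr_ae (g := fun _ => 0)]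
      · simp
      · filter_upwards [h1] with y hy
        simp [hy]
    rw [h2, ENNReal.zero_rpow_of_pos (by norm_num)]
    exact zero_le
  have hA0 : A ≠ 0 := by
    intro h0
    apply hμ0
    rw [← Measure.measure_univ_eq_zero, ← iUnion_ball_nat (0 : Euc n)]
    refine measure_iUnion_null fun k => ?_
    refine measure_mono_null (ball_subset_ball (by linarith : (k:ℝ) ≤ k + 1)) ?_
    have := hμ 0 (k + 1) (by positivity)
    rw [h0, zero_mul] at this
    exact le_antisymm this zero_le
  have hAt : A ≠ ⊤ := by finiteness
  have hM0 : M ≠ 0 := by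
    intro h0
    apply hA0
    rw [hAd, h0, ENNReal.zero_rpow_of_pos hp0, zero_mul]
  set U : Euc n → ℝ≥0∞ := fun y => ∫⁻ z, ENNReal.ofReal ‖y - z‖ ^ (-(n - α * p / 2)) ∂μ with hU
  have hUm : Measurable U := meas_pot n _ μ
  have hU0 : ∀ x, U x ≠ 0 := by
    intro x h0
    apply hμ0
    rw [hU, lintegral_eq_zero_iff (by fun_prop)] at h0
    rw [← ae_eq_bot, ← eventually_false_iff_eq_bot]
    filter_upwards [h0] with y hy
    simp only [Pi.zero_apply, ENNReal.rpow_eq_zero_iff, ENNReal.ofReal_ne_top, false_and, or_false] at hy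
    linarith [hy.2]
  have hUt : ∀ᵐ y, U y ≠ ⊤ := by
    have h1 : ∀ k : ℕ, ∀ᵐ y ∂(volume.restrict (ball (0 : Euc n) k)), U y ≠ ⊤ := by
      intro k
      refine ae_restrict_of_ae_restrict_of_subset
        (ball_subset_ball (by linarith : (k:ℝ) ≤ k + 1)) ?_
      have h2 := H2 μ A hμ 0 (k + 1) (by positivity)
      have h3 : ∫⁻ y in ball (0 : Euc n) (k + 1), U y ≠ ⊤ :=
        ne_top_of_le_ne_top (by finiteness) h2
      filter_upwards [ae_lt_top hUm h3] with y hy using hy.ne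
    have h2 := (ae_restrict_iUnion_iff (fun k : ℕ => ball (0 : Euc n) k) (fun y => U y ≠ ⊤)).2 h1
    rwa [iUnion_ball_nat, Measure.restrict_univ] at h2
  by_cases hI : ∫⁻ x, (‖f x‖₊ : ℝ≥0∞) ^ (2 : ℝ) * (v x)⁻¹ = ⊤
  · rw [hI, ENNReal.top_rpow_of_pos (by norm_num), ENNReal.mul_top]
    · exact le_top
    · exact mul_ne_zero (mul_ne_zero (by simp) hE0'.ne') hM0
  have hFm : Measurable (fun y => (‖f y‖₊ : ℝ≥0∞)) := by fun_prop
  have hS := schur n (α - n) ((C + 1) * A ^ (1 / p)) v (fun y => U y ^ (1 - 1 / p))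
    (fun y => (‖f y‖₊ : ℝ≥0∞)) hv (by fun_prop) hFm ?_ (fun y => ENNReal.ofReal_ne_top) ?_ ?_ ?_
  · have hA1 : A ^ (1 / p) = M * ENNReal.ofReal (2 ^ (n - α * p)) ^ (1 / p) := by
      rw [hAd, ENNReal.mul_rpow_of_nonneg _ _ (by positivity), ← ENNReal.rpow_mul,
        mul_one_div_cancel hp0.ne', ENNReal.rpow_one]
    calc _ ≤ (((C + 1) * A ^ (1 / p)) ^ (2:ℝ) * ∫⁻ x, (‖f x‖₊ : ℝ≥0∞) ^ (2 : ℝ) * (v x)⁻¹) ^ (1/2:ℝ) :=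
          ENNReal.rpow_le_rpow hS (by norm_num)
      _ = _ := by
          rw [ENNReal.mul_rpow_of_nonneg _ _ (by norm_num), ← ENNReal.rpow_mul,
            mul_one_div_cancel (by norm_num), ENNReal.rpow_one, hA1]
          ring
  · intro x
    by_cases hx : U x = ⊤
    · rw [hx, ENNReal.top_rpow_of_pos hq, ENNReal.mul_top]
      · exact le_top
      · exact mul_ne_zero (by simp) (ENNReal.rpow_pos (pos_iff_ne_zero.2 hA0) hAt).ne'
    · have := H v hv A hA0 hAt hμ U hU x (hU0 x) hx
      rw [neg_sub] at this
      refine this.trans ?_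
      gcongr
      exact le_self_add
  · intro y
    intro h0
    rcases ENNReal.rpow_eq_zero_iff.1 h0 with h1 | h1
    · exact hU0 y h1.1
    · linarith [h1.2]
  · filter_upwards [hUt] with y hy
    exact ENNReal.rpow_ne_top_of_nonneg hq.le hy
  · filter_upwards [ae_lt_top (by fun_prop) hI] with y hy hv0
    by_contra hne
    rw [hv0, ENNReal.inv_zero, ENNReal.mul_top] at hy
    · exact lt_irrefl _ hy
    · simpa using hne
end
end

section
/- (Weighted endpoint estimate for the boundary case) Let n ≥ 3, 0 < α < n, 0 < ε < 1 with n−1+ε ≤ n, and V ≥ 0 measurable with V ∈ 𝓛^{α,p} for p = q(n−1+ε)/α and some 1 < q ≤ n/(n−1+ε). Then for any ball B = B(0,r), ‖χ_B · V^{(n−1+ε)/2α} · I_{n−1+ε}(V^{(n−1+ε)/2α} g)‖_{L²} ≤ C ‖χ_B V‖_{𝓛^{α,p}}^{(n−1+ε)/2α} ‖V‖_{𝓛^{α,p}}^{(n−1+ε)/2α} ‖g‖_{L²} for all measurable g, with C = C(n,α,p). -/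
open MeasureTheory ENNReal Metric Set Filter
open scoped FourierTransform
noncomputable section

namespace WE

section core

lemma rpow_anti {a : ℝ} (h : a ≤ 0) {x y : ℝ≥0∞} (hx : x ≤ y) : y ^ a ≤ x ^ a := by
  obtain ⟨b, rfl⟩ : ∃ b, a = -b := ⟨-a, by ring⟩
  rw [ENNReal.rpow_neg, ENNReal.rpow_neg, ENNReal.inv_le_inv]
  exact ENNReal.rpow_le_rpow hx (by linarith)

lemma exists_near {x : ℝ≥0∞} (h0 : x ≠ 0) (h1 : x ≤ 1) :
    ∃ k : ℕ, (2⁻¹ : ℝ≥0∞) ^ (k + 1) ≤ x ∧ x ≤ 2⁻¹ ^ k := by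
  classical
  have hex : ∃ k : ℕ, (2⁻¹ : ℝ≥0∞) ^ k < x := ENNReal.exists_inv_two_pow_lt h0
  have hs := Nat.find_spec hex
  have hm := fun m => Nat.find_min (m := m) hex
  rcases hk : Nat.find hex with _ | k
  · rw [hk] at hs; simp at hs; exact absurd h1 (not_le.2 hs)
  · rw [hk] at hs
    refine ⟨k, hs.le, ?_⟩
    have := hm k (by omega)
    exact not_lt.1 this

lemma exists_far {x : ℝ≥0∞} (h0 : x ≠ ⊤) (h1 : 1 ≤ x) :
    ∃ k : ℕ, (2 : ℝ≥0∞) ^ k ≤ x ∧ x ≤ 2 ^ (k + 1) := by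
  obtain ⟨k, h2, h3⟩ := exists_near (x := x⁻¹) (by simpa using h0) (by simpa using h1)
  refine ⟨k, ?_, ?_⟩
  · rw [← ENNReal.inv_pow] at h3; exact ENNReal.inv_le_inv.1 h3
  · rw [← ENNReal.inv_pow] at h2; exact ENNReal.inv_le_inv.1 h2

lemma mul_pow_rpow {r b : ℝ≥0∞} (hr : r ≠ ⊤) (hb : b ≠ ⊤) (k : ℕ) (a : ℝ) :
    (r * b ^ k) ^ a = r ^ a * (b ^ a) ^ k := by
  rw [ENNReal.mul_rpow_of_ne_top hr (by finiteness), ← ENNReal.rpow_natCast,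
    ← ENNReal.rpow_natCast, ← ENNReal.rpow_mul, ← ENNReal.rpow_mul, mul_comm (k : ℝ)]

lemma rpow_ne_top'' {r : ℝ≥0∞} (h0 : r ≠ 0) (h1 : r ≠ ⊤) (a : ℝ) : r ^ a ≠ ⊤ := by
  simp [ENNReal.rpow_eq_top_iff, h0, h1]

lemma rpow_ne_zero'' {r : ℝ≥0∞} (h0 : r ≠ 0) (h1 : r ≠ ⊤) (a : ℝ) : r ^ a ≠ 0 := by
  simp [ENNReal.rpow_eq_zero_iff, h0, h1]

variable {X : Type*} [MetricSpace X] [MeasurableSpace X] [BorelSpace X]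
  [SecondCountableTopology X]

set_option linter.unusedSectionVars false

lemma layer {μ : Measure X} {h : X → ℝ≥0∞} (hh : Measurable h) (v : X) (S : Set X) (hS : MeasurableSet S) (a : ℝ)
    (c r : ℕ → ℝ≥0∞)
    (H : ∀ᵐ y ∂μ, y ∈ S → ∃ k, edist v y ^ a ≤ c k ∧ edist v y ≤ r k) :
    ∫⁻ y in S, edist v y ^ a * h y ∂μ ≤ ∑' k, c k * ∫⁻ y in {y | edist v y ≤ r k}, h y ∂μ := by
  have hm : ∀ k, MeasurableSet {y | edist v y ≤ r k} := fun k =>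
    measurableSet_le (by fun_prop) measurable_const
  calc ∫⁻ y in S, edist v y ^ a * h y ∂μ 
      ≤ ∫⁻ y in S, ∑' k, c k * ({y | edist v y ≤ r k}.indicator h y) ∂μ := by
        refine setLIntegral_mono_ae' hS ?_
        filter_upwards [H] with y hy hyS
        obtain ⟨k, h1, h2⟩ := hy hyS
        refine le_trans ?_ (ENNReal.le_tsum k)
        rw [Set.indicator_of_mem (by exact h2)]
        gcongr
    _ ≤ ∫⁻ y, ∑' k, c k * ({y | edist v y ≤ r k}.indicator h y) ∂μ := setLIntegral_le_lintegral _ _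
    _ = _ := by
        rw [lintegral_tsum (fun k => ((hh.indicator (hm k)).const_mul _).aemeasurable)]
        congr 1; ext k
        rw [lintegral_const_mul _ (hh.indicator (hm k)), lintegral_indicator (hm k)]

lemma near (μ : Measure X) [NullSingletonClass μ] (a d : ℝ) (ha : a ≤ 0) (had : 0 < a + d) :
    ∃ C : ℝ≥0∞, C ≠ ⊤ ∧ ∀ (h : X → ℝ≥0∞), Measurable h → ∀ (v : X) (D r : ℝ≥0∞), r ≠ 0 → r ≠ ⊤ →
      (∀ t : ℝ≥0∞, t ≠ 0 → t ≠ ⊤ → ∫⁻ y in {y | edist v y ≤ t}, h y ∂μ ≤ D * t ^ d) →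
      ∫⁻ y in {y | edist v y ≤ r}, edist v y ^ a * h y ∂μ ≤ C * D * r ^ (a + d) := by
  have h2 : (2⁻¹ : ℝ≥0∞) ≠ 0 := by simp
  have h2' : (2⁻¹ : ℝ≥0∞) ≠ ⊤ := by simp
  refine ⟨(2⁻¹ : ℝ≥0∞) ^ a * (1 - 2⁻¹ ^ (a + d))⁻¹, ?_, ?_⟩
  · refine ENNReal.mul_ne_top (rpow_ne_top'' h2 h2' _) ?_
    rw [ENNReal.inv_ne_top]
    refine (tsub_pos_of_lt ?_).ne'
    exact ENNReal.rpow_lt_one (ENNReal.inv_lt_one.2 (by norm_num)) had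
  · intro h hh v D r hr0 hr hD
    refine (layer hh v {y | edist v y ≤ r} (measurableSet_le (by fun_prop) measurable_const) a
      (fun k => (r * 2⁻¹ ^ (k + 1)) ^ a) (fun k => r * 2⁻¹ ^ k) ?_).trans ?_
    · have : ∀ᵐ y ∂μ, y ≠ v := by simp [ae_iff]
      filter_upwards [this] with y hy hyr
      have hy0 : edist v y ≠ 0 := by simpa [edist_eq_zero] using hy.symm
      obtain ⟨k, h3, h4⟩ := exists_near (x := edist v y / r) (ENNReal.div_ne_zero.2 ⟨hy0, hr⟩)
        (ENNReal.div_le_of_le_mul (by simpa using hyr))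
      refine ⟨k, rpow_anti ha ?_, ?_⟩
      · rw [ENNReal.le_div_iff_mul_le (Or.inl hr0) (Or.inl hr)] at h3
        rwa [mul_comm]
      · rw [ENNReal.div_le_iff hr0 hr] at h4
        rwa [mul_comm]
    · calc _ ≤ ∑' k : ℕ, ((2⁻¹ : ℝ≥0∞) ^ a * D * r ^ (a + d)) * (2⁻¹ ^ (a + d)) ^ k := by
            refine ENNReal.tsum_le_tsum fun k => ?_
            have := hD (r * 2⁻¹ ^ k) (mul_ne_zero hr0 (pow_ne_zero _ h2)) (by finiteness)
            refine (mul_le_mul_right this _).trans (le_of_eq ?_)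
            rw [mul_pow_rpow hr h2', mul_pow_rpow hr h2', ENNReal.rpow_add _ _ h2 h2',
              ENNReal.rpow_add _ _ hr0 hr]
            ring
        _ = _ := by
            rw [ENNReal.tsum_mul_left, ENNReal.tsum_geometric]; ring

lemma far (μ : Measure X) (a d : ℝ) (ha : a ≤ 0) (had : a + d < 0) :
    ∃ C : ℝ≥0∞, C ≠ ⊤ ∧ ∀ (h : X → ℝ≥0∞), Measurable h → ∀ (v : X) (D r : ℝ≥0∞), r ≠ 0 → r ≠ ⊤ →
      (∀ t : ℝ≥0∞, t ≠ 0 → t ≠ ⊤ → ∫⁻ y in {y | edist v y ≤ t}, h y ∂μ ≤ D * t ^ d) →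
      ∫⁻ y in {y | r ≤ edist v y}, edist v y ^ a * h y ∂μ ≤ C * D * r ^ (a + d) := by
  have h2 : (2 : ℝ≥0∞) ≠ 0 := by simp
  have h2' : (2 : ℝ≥0∞) ≠ ⊤ := by simp
  refine ⟨(2 : ℝ≥0∞) ^ d * (1 - 2 ^ (a + d))⁻¹, ?_, ?_⟩
  · refine ENNReal.mul_ne_top (rpow_ne_top'' h2 h2' _) ?_
    rw [ENNReal.inv_ne_top]
    refine (tsub_pos_of_lt ?_).ne'
    exact ENNReal.rpow_lt_one_of_one_lt_of_neg (by norm_num) had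
  · intro h hh v D r hr0 hr hD
    refine (layer hh v {y | r ≤ edist v y} (measurableSet_le measurable_const (by fun_prop)) a
      (fun k => (r * 2 ^ k) ^ a) (fun k => r * 2 ^ (k + 1)) ?_).trans ?_
    · refine Eventually.of_forall fun y hyr => ?_
      obtain ⟨k, h3, h4⟩ := exists_far (x := edist v y / r)
        (ENNReal.div_ne_top (edist_ne_top _ _) hr0)
        (by rw [ENNReal.le_div_iff_mul_le (Or.inl hr0) (Or.inl hr)]; simpa using hyr)
      refine ⟨k, rpow_anti ha ?_, ?_⟩
      · rw [ENNReal.le_div_iff_mul_le (Or.inl hr0) (Or.inl hr)] at h3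
        rwa [mul_comm]
      · rw [ENNReal.div_le_iff hr0 hr] at h4
        rwa [mul_comm]
    · calc _ ≤ ∑' k : ℕ, ((2 : ℝ≥0∞) ^ d * D * r ^ (a + d)) * (2 ^ (a + d)) ^ k := by
            refine ENNReal.tsum_le_tsum fun k => ?_
            have := hD (r * 2 ^ (k + 1)) (mul_ne_zero hr0 (pow_ne_zero _ h2)) (by finiteness)
            refine (mul_le_mul_right this _).trans (le_of_eq ?_)
            rw [mul_pow_rpow hr h2', mul_pow_rpow hr h2', ENNReal.rpow_add _ _ h2 h2',
              ENNReal.rpow_add _ _ hr0 hr]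
            ring
        _ = _ := by
            rw [ENNReal.tsum_mul_left, ENNReal.tsum_geometric]; ring

lemma young {z l : ℝ≥0∞} (h0 : l ≠ 0) (h1 : l ≠ ⊤) {q : ℝ} (hq : 1 < q) :
    z ≤ l + l ^ (1 - q) * z ^ q := by
  rcases le_total z l with h | h
  · exact h.trans le_self_add
  · refine le_trans ?_ le_add_self
    by_cases hz : z = ⊤
    · subst hz
      rw [ENNReal.top_rpow_of_pos (by linarith), ENNReal.mul_top (rpow_ne_zero'' h0 h1 _)]
    · have hz0 : z ≠ 0 := fun h' => h0 (by simpa [h'] using h)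
      calc z = z ^ (1 - q) * z ^ q := by
            rw [← ENNReal.rpow_add _ _ hz0 hz]; simp
        _ ≤ _ := by
            gcongr ?_ * _
            exact rpow_anti (by linarith) h


lemma mass (μ : Measure X) {n β q : ℝ} (hq : 1 < q) {D : ℝ≥0∞}
    (hvol : ∀ (x : X) (t : ℝ≥0∞), t ≠ 0 → t ≠ ⊤ → μ {y | edist x y ≤ t} ≤ D * t ^ n)
    {z : X → ℝ≥0∞} (hz : Measurable z)
    (hD : ∀ (x : X) (t : ℝ≥0∞), t ≠ 0 → t ≠ ⊤ →
      ∫⁻ y in {y | edist x y ≤ t}, z y ^ q ∂μ ≤ D * t ^ (n - β * q))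
    (x : X) (t : ℝ≥0∞) (h0 : t ≠ 0) (h1 : t ≠ ⊤) :
    ∫⁻ y in {y | edist x y ≤ t}, z y ∂μ ≤ (2 * D) * t ^ (n - β) := by
  calc ∫⁻ y in {y | edist x y ≤ t}, z y ∂μ
      ≤ ∫⁻ y in {y | edist x y ≤ t}, (t ^ (-β) + (t ^ (-β)) ^ (1 - q) * z y ^ q) ∂μ :=
        lintegral_mono fun y => young (rpow_ne_zero'' h0 h1 _) (rpow_ne_top'' h0 h1 _) hq
    _ = t ^ (-β) * μ {y | edist x y ≤ t} +
        (t ^ (-β)) ^ (1 - q) * ∫⁻ y in {y | edist x y ≤ t}, z y ^ q ∂μ := by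
        rw [lintegral_add_left measurable_const, lintegral_const_mul _ (hz.pow_const _)]
        simp
    _ ≤ t ^ (-β) * (D * t ^ n) + (t ^ (-β)) ^ (1 - q) * (D * t ^ (n - β * q)) := by
        gcongr
        · exact hvol x t h0 h1
        · exact hD x t h0 h1
    _ = _ := by
        rw [← ENNReal.rpow_mul]
        have e1 : t ^ (n - β) = t ^ (-β) * t ^ n := by
          rw [← ENNReal.rpow_add _ _ h0 h1]; ring_nf
        have e2 : t ^ (n - β) = t ^ (-β * (1 - q)) * t ^ (n - β * q) := by
          rw [← ENNReal.rpow_add _ _ h0 h1]; ring_nf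
        rw [two_mul, add_mul]
        nth_rw 1 [e1]
        rw [e2]; ring

lemma half_ne {R : ℝ≥0∞} (h0 : R ≠ 0) (h1 : R ≠ ⊤) : R / 2 ≠ 0 ∧ R / 2 ≠ ⊤ :=
  ⟨by simp [h0], ENNReal.div_ne_top h1 (by simp)⟩

lemma half_rpow {R : ℝ≥0∞} (h1 : R ≠ ⊤) (a : ℝ) : (R / 2) ^ a = 2⁻¹ ^ a * R ^ a := by
  rw [div_eq_mul_inv, ENNReal.mul_rpow_of_ne_top h1 (by simp), mul_comm]

lemma three (μ : Measure X) [NullSingletonClass μ] {n β σ : ℝ} (hβn : β < n)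
    (hσ1 : β < σ) (hσ2 : σ < n) {D : ℝ≥0∞} (hDt : D ≠ ⊤) :
    ∃ C : ℝ≥0∞, C ≠ ⊤ ∧ ∀ z : X → ℝ≥0∞, Measurable z →
    (∀ (x : X) (t : ℝ≥0∞), t ≠ 0 → t ≠ ⊤ →
      ∫⁻ y in {y | edist x y ≤ t}, z y ∂μ ≤ D * t ^ (n - β)) →
    ∀ x v, x ≠ v → ∫⁻ y, edist x y ^ (β - n) * (z y * edist y v ^ (σ - n)) ∂μ ≤
      C * edist x v ^ (σ - n) *
        (1 + ∫⁻ y in {y | edist x y ≤ edist x v}, edist x y ^ (β - n) * z y ∂μ) := by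
  obtain ⟨C1, hC1, H1⟩ := near μ (σ - n) (n - β) (by linarith) (by linarith)
  obtain ⟨C2, hC2, H2⟩ := far μ (β + σ - 2 * n) (n - β) (by linarith) (by linarith)
  have h2 : (2⁻¹ : ℝ≥0∞) ≠ 0 := by simp
  have h2' : (2⁻¹ : ℝ≥0∞) ≠ ⊤ := by simp
  have ht := fun a => rpow_ne_top'' h2 h2' a
  refine ⟨2⁻¹ ^ (β - n) * C1 * D * 2⁻¹ ^ (σ - β) + 2⁻¹ ^ (β - n) * C2 * D * 2⁻¹ ^ (σ - n)
    + 2⁻¹ ^ (σ - n), ?_, ?_⟩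
  · have a1 := ht (β - n)
    have a2 := ht (σ - n)
    have a3 := ht (σ - β)
    finiteness
  intro z hz hD x v hxv
  set R := edist x v with hR
  have hR0 : R ≠ 0 := by simpa [hR, edist_eq_zero] using hxv
  have hR1 : R ≠ ⊤ := edist_ne_top _ _
  obtain ⟨hr0, hr1⟩ := half_ne hR0 hR1
  set J := ∫⁻ y in {y | edist x y ≤ R}, edist x y ^ (β - n) * z y ∂μ with hJ
  have m1 : MeasurableSet {y | edist v y ≤ R / 2} := measurableSet_le (by fun_prop) measurable_const
  have m2 : MeasurableSet {y | R / 2 ≤ edist v y} := measurableSet_le measurable_const (by fun_prop)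
  have m3 : MeasurableSet {y | edist x y ≤ R} := measurableSet_le (by fun_prop) measurable_const
  have key : ∀ y, edist x y ^ (β - n) * (z y * edist y v ^ (σ - n)) ≤
      {y | edist v y ≤ R / 2}.indicator
        (fun y => (R / 2) ^ (β - n) * (edist v y ^ (σ - n) * z y)) y +
      {y | R / 2 ≤ edist v y}.indicator
        (fun y => 2⁻¹ ^ (β - n) * (edist v y ^ (β + σ - 2 * n) * z y)) y +
      {y | edist x y ≤ R}.indicator
        (fun y => (R / 2) ^ (σ - n) * (edist x y ^ (β - n) * z y)) y := by
    intro y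
    rw [edist_comm y v]
    have tri : R ≤ edist x y + edist v y := by
      rw [hR, edist_comm v y]; exact edist_triangle _ _ _
    rcases le_total (edist v y) (R / 2) with h | h
    · refine le_trans ?_ (le_self_add.trans le_self_add)
      rw [indicator_of_mem (by exact h)]
      have hs : R / 2 ≤ edist x y := by
        by_contra hc
        push Not at hc
        have := ENNReal.add_lt_add_of_lt_of_le (ne_top_of_le_ne_top hr1 h) hc h
        rw [ENNReal.add_halves] at this
        exact absurd tri (not_le.2 this)
      have := rpow_anti (a := β - n) (by linarith) hs
      rw [mul_comm (z y)]
      gcongr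
    · rcases le_total (edist x y) R with h' | h'
      · refine le_trans ?_ le_add_self
        rw [indicator_of_mem (by exact h')]
        have := rpow_anti (a := σ - n) (by linarith) h
        calc _ ≤ edist x y ^ (β - n) * (z y * (R / 2) ^ (σ - n)) := by gcongr
          _ = _ := by ring
      · refine le_trans ?_ (le_add_self.trans le_self_add)
        rw [indicator_of_mem (by exact h)]
        have hs : edist v y / 2 ≤ edist x y := by
          refine ENNReal.div_le_of_le_mul ?_
          rw [mul_two]
          calc edist v y ≤ edist v x + edist x y := edist_triangle _ _ _
            _ ≤ _ := by rw [edist_comm v x]; gcongr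
        have := rpow_anti (a := β - n) (by linarith) hs
        rw [half_rpow (edist_ne_top _ _)] at this
        have hv0 : edist v y ≠ 0 := fun h0 => hr0 (by simpa [h0] using h)
        have e : edist v y ^ (β + σ - 2 * n) = edist v y ^ (β - n) * edist v y ^ (σ - n) := by
          rw [← ENNReal.rpow_add _ _ hv0 (edist_ne_top _ _)]; ring_nf
        rw [e]
        calc _ ≤ (2⁻¹ ^ (β - n) * edist v y ^ (β - n)) * (z y * edist v y ^ (σ - n)) := by gcongr
          _ = _ := by ring
  calc _ ≤ _ := lintegral_mono key
    _ = (R / 2) ^ (β - n) * ∫⁻ y in {y | edist v y ≤ R / 2}, edist v y ^ (σ - n) * z y ∂μ +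
        2⁻¹ ^ (β - n) * ∫⁻ y in {y | R / 2 ≤ edist v y}, edist v y ^ (β + σ - 2 * n) * z y ∂μ +
        (R / 2) ^ (σ - n) * J := by
      rw [lintegral_add_left, lintegral_add_left, lintegral_indicator m1, lintegral_indicator m2,
        lintegral_indicator m3, lintegral_const_mul, lintegral_const_mul, lintegral_const_mul]
      · fun_prop
      · fun_prop
      · fun_prop
      · exact Measurable.indicator (by fun_prop) m1
      · exact (Measurable.indicator (by fun_prop) m1).add (Measurable.indicator (by fun_prop) m2)
    _ ≤ (R / 2) ^ (β - n) * (C1 * D * (R / 2) ^ (σ - n + (n - β))) +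
        2⁻¹ ^ (β - n) * (C2 * D * (R / 2) ^ (β + σ - 2 * n + (n - β))) +
        (R / 2) ^ (σ - n) * J := by
      gcongr
      · exact H1 z hz v D _ hr0 hr1 (hD v)
      · exact H2 z hz v D _ hr0 hr1 (hD v)
    _ = (2⁻¹ ^ (β - n) * C1 * D * 2⁻¹ ^ (σ - β) + 2⁻¹ ^ (β - n) * C2 * D * 2⁻¹ ^ (σ - n))
          * R ^ (σ - n) * 1 + 2⁻¹ ^ (σ - n) * R ^ (σ - n) * J := by
      rw [show σ - n + (n - β) = σ - β by ring,
        show β + σ - 2 * n + (n - β) = σ - n by ring]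
      simp only [half_rpow hR1]
      have e : R ^ (σ - n) = R ^ (β - n) * R ^ (σ - β) := by
        rw [← ENNReal.rpow_add _ _ hR0 hR1]; ring_nf
      rw [e]; ring
    _ ≤ _ := by
      rw [mul_add]
      have aux : ∀ P Q T : ℝ≥0∞, P * T * 1 + Q * T * J ≤ (P + Q) * T * 1 + (P + Q) * T * J := by
        intro P Q T
        have b1 : P ≤ P + Q := le_self_add
        have b2 : Q ≤ P + Q := le_add_self
        exact add_le_add (mul_le_mul_left (mul_le_mul_left b1 _) _)
          (mul_le_mul_left (mul_le_mul_left b2 _) _)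
      exact aux _ _ _

lemma Jbound (μ : Measure X) [NullSingletonClass μ] {n β q η : ℝ} (hq : 1 < q)
    (hη : 0 < η) (hηn : η ≤ n) {D : ℝ≥0∞} (hDt : D ≠ ⊤)
    (hvol : ∀ (x : X) (t : ℝ≥0∞), t ≠ 0 → t ≠ ⊤ → μ {y | edist x y ≤ t} ≤ D * t ^ n) :
    ∃ C : ℝ≥0∞, C ≠ ⊤ ∧ ∀ z : X → ℝ≥0∞, Measurable z →
    ∀ (x : X) (R : ℝ≥0∞), R ≠ 0 → R ≠ ⊤ →
      ∫⁻ y in {y | edist x y ≤ R}, edist x y ^ (β - n) * z y ∂μ ≤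
      C + R ^ (η * (q - 1)) * ∫⁻ y in {y | edist x y ≤ R},
        edist x y ^ (β * q - η * (q - 1) - n) * z y ^ q ∂μ := by
  obtain ⟨C1, hC1, H1⟩ := near μ (η - n) n (by linarith) (by linarith)
  refine ⟨C1 * D, by finiteness, ?_⟩
  intro z hz x R hR0 hR1
  have m3 : MeasurableSet {y | edist x y ≤ R} := measurableSet_le (by fun_prop) measurable_const
  have key : ∀ᵐ y ∂μ, y ∈ {y | edist x y ≤ R} → edist x y ^ (β - n) * z y ≤
      R ^ (-η) * (edist x y ^ (η - n) * 1) +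
        R ^ (η * (q - 1)) * (edist x y ^ (β * q - η * (q - 1) - n) * z y ^ q) := by
    have : ∀ᵐ y ∂μ, y ≠ x := by simp [ae_iff]
    filter_upwards [this] with y hy _
    have h0 : edist x y ≠ 0 := by simpa [edist_eq_zero] using hy.symm
    have h1 : edist x y ≠ ⊤ := edist_ne_top _ _
    have b0 : edist x y ^ (η - β) * R ^ (-η) ≠ 0 :=
      mul_ne_zero (rpow_ne_zero'' h0 h1 _) (rpow_ne_zero'' hR0 hR1 _)
    have b1 : edist x y ^ (η - β) * R ^ (-η) ≠ ⊤ :=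
      ENNReal.mul_ne_top (rpow_ne_top'' h0 h1 _) (rpow_ne_top'' hR0 hR1 _)
    have := young (z := z y) b0 b1 hq
    calc _ ≤ edist x y ^ (β - n) * _ := mul_le_mul_right this _
      _ = _ := by
        rw [ENNReal.mul_rpow_of_ne_top (rpow_ne_top'' h0 h1 _) (rpow_ne_top'' hR0 hR1 _),
          ← ENNReal.rpow_mul, ← ENNReal.rpow_mul, show -η * (1 - q) = η * (q - 1) by ring]
        have e1 : edist x y ^ (η - n) = edist x y ^ (β - n) * edist x y ^ (η - β) := by
          rw [← ENNReal.rpow_add _ _ h0 h1]; ring_nf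
        have e2 : edist x y ^ (β * q - η * (q - 1) - n) =
            edist x y ^ (β - n) * edist x y ^ ((η - β) * (1 - q)) := by
          rw [← ENNReal.rpow_add _ _ h0 h1]; ring_nf
        rw [e1, e2]; ring
  calc _ ≤ _ := setLIntegral_mono_ae' m3 key
    _ = R ^ (-η) * ∫⁻ y in {y | edist x y ≤ R}, (edist x y ^ (η - n) * 1) ∂μ +
        R ^ (η * (q - 1)) * ∫⁻ y in {y | edist x y ≤ R},
          (edist x y ^ (β * q - η * (q - 1) - n) * z y ^ q) ∂μ := by
      rw [lintegral_add_left (by fun_prop), lintegral_const_mul _ (by fun_prop),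
        lintegral_const_mul _ (by fun_prop)]
    _ ≤ R ^ (-η) * (C1 * D * R ^ (η - n + n)) + R ^ (η * (q - 1)) *
          ∫⁻ y in {y | edist x y ≤ R},
          (edist x y ^ (β * q - η * (q - 1) - n) * z y ^ q) ∂μ := by
      gcongr
      refine H1 (fun _ => 1) measurable_const x D R hR0 hR1 ?_
      intro t h0 h1
      simpa using hvol x t h0 h1
    _ = _ := by
      congr 1
      have e1 : R ^ (-η) * R ^ (η - n + n) = 1 := by
        rw [← ENNReal.rpow_add _ _ hR0 hR1]; ring_nf; simp
      rw [mul_left_comm, e1, mul_one]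

/-- the auxiliary potential -/
def pot (μ : Measure X) (n σ q : ℝ) (z : X → ℝ≥0∞) (y : X) : ℝ≥0∞ :=
  ∫⁻ v, edist y v ^ (σ - n) * z v ^ q ∂μ

lemma meas_pot (μ : Measure X) [SFinite μ] (n σ q : ℝ) {z : X → ℝ≥0∞} (hz : Measurable z) :
    Measurable (pot μ n σ q z) := by
  unfold pot
  exact Measurable.lintegral_prod_right' (f := fun p : X × X => edist p.1 p.2 ^ (σ - n) * z p.2 ^ q)
    (by fun_prop)

lemma potential (μ : Measure X) [SFinite μ] [NullSingletonClass μ] {n β q : ℝ} (hβ : 0 < β)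
    (hβn : β < n) (hq : 1 < q) (hqn : β * q ≤ n) {D : ℝ≥0∞} (hDt : D ≠ ⊤)
    (hvol : ∀ (x : X) (t : ℝ≥0∞), t ≠ 0 → t ≠ ⊤ → μ {y | edist x y ≤ t} ≤ D * t ^ n) :
    ∃ C : ℝ≥0∞, C ≠ ⊤ ∧ ∀ z : X → ℝ≥0∞, Measurable z →
    (∀ (x : X) (t : ℝ≥0∞), t ≠ 0 → t ≠ ⊤ →
      ∫⁻ y in {y | edist x y ≤ t}, z y ^ q ∂μ ≤ D * t ^ (n - β * q)) →
    ∀ x, ∫⁻ y, edist x y ^ (β - n) * (z y * pot μ n (β * (q + 1) / 2) q z y) ∂μ ≤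
      C * pot μ n (β * (q + 1) / 2) q z x := by
  have hq1 : 0 < β * (q - 1) := mul_pos hβ (by linarith)
  obtain ⟨σ, hσ⟩ : ∃ σ, σ = β * (q + 1) / 2 := ⟨_, rfl⟩
  obtain ⟨e, he⟩ : ∃ e, e = β / 4 * (q - 1) := ⟨_, rfl⟩
  rw [← hσ]
  obtain ⟨C1, hC1, H1⟩ := three μ (n := n) (β := β) (σ := σ) hβn (by rw [hσ]; linarith)
    (by rw [hσ]; linarith) (D := 2 * D) (by finiteness)
  obtain ⟨C2, hC2, H2⟩ := Jbound μ (n := n) (β := β) (q := q) (η := β / 4) hq (by linarith)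
    (by linarith) hDt hvol
  obtain ⟨C3, hC3, H3⟩ := far μ (σ - n + e) (n - β * q) (by rw [hσ, he]; linarith)
    (by rw [hσ, he]; linarith)
  rw [← he] at H2
  refine ⟨C1 * (1 + C2) + C1 * (C3 * D), by finiteness, ?_⟩
  intro z hz hD x
  have hne : ∀ᵐ y ∂μ, y ≠ x := by simp [ae_iff]
  have mI : Measurable fun p : X × X =>
      {p : X × X | edist x p.2 ≤ edist x p.1}.indicator (fun p =>
        (edist x p.1 ^ (σ - n + e) * z p.1 ^ q) *
          (edist x p.2 ^ (β * q - e - n) * z p.2 ^ q)) p :=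
    Measurable.indicator (by fun_prop) (measurableSet_le (by fun_prop) (by fun_prop))
  have step1 : ∫⁻ y, edist x y ^ (β - n) * (z y * pot μ n σ q z y) ∂μ =
      ∫⁻ v, (∫⁻ y, edist x y ^ (β - n) * (z y * edist y v ^ (σ - n)) ∂μ) * z v ^ q ∂μ := by
    calc _ = ∫⁻ y, ∫⁻ v, edist x y ^ (β - n) * (z y * edist y v ^ (σ - n)) * z v ^ q ∂μ ∂μ := by
          congr 1; ext y
          rw [pot, ← lintegral_const_mul _ (by fun_prop), ← lintegral_const_mul _ (by fun_prop)]
          congr 1; ext v; ring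
      _ = ∫⁻ v, ∫⁻ y, edist x y ^ (β - n) * (z y * edist y v ^ (σ - n)) * z v ^ q ∂μ ∂μ := by
          rw [lintegral_lintegral_swap]
          refine Measurable.aemeasurable ?_
          unfold Function.uncurry
          fun_prop
      _ = _ := by
          congr 1; ext v
          rw [lintegral_mul_const _ (by fun_prop)]
  rw [step1]
  have step2 : ∀ᵐ v ∂μ,
      (∫⁻ y, edist x y ^ (β - n) * (z y * edist y v ^ (σ - n)) ∂μ) * z v ^ q ≤
      C1 * (1 + C2) * (edist x v ^ (σ - n) * z v ^ q) +
      C1 * ∫⁻ y, {p : X × X | edist x p.2 ≤ edist x p.1}.indicator (fun p =>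
        (edist x p.1 ^ (σ - n + e) * z p.1 ^ q) *
          (edist x p.2 ^ (β * q - e - n) * z p.2 ^ q)) (v, y) ∂μ := by
    filter_upwards [hne] with v hv
    have h0 : edist x v ≠ 0 := by simpa [edist_eq_zero] using hv.symm
    have h1 : edist x v ≠ ⊤ := edist_ne_top _ _
    have a1 := H1 z hz (fun x t h0 h1 => mass μ hq hvol hz hD x t h0 h1) x v hv.symm
    have a2 := H2 z hz x (edist x v) h0 h1
    have m3 : MeasurableSet {y | edist x y ≤ edist x v} :=
      measurableSet_le (by fun_prop) measurable_const
    have a3 : ∫⁻ y, {p : X × X | edist x p.2 ≤ edist x p.1}.indicator (fun p =>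
        (edist x p.1 ^ (σ - n + e) * z p.1 ^ q) *
          (edist x p.2 ^ (β * q - e - n) * z p.2 ^ q)) (v, y) ∂μ =
        (edist x v ^ (σ - n + e) * z v ^ q) * ∫⁻ y in {y | edist x y ≤ edist x v},
          edist x y ^ (β * q - e - n) * z y ^ q ∂μ := by
      rw [← lintegral_const_mul _ (by fun_prop), ← lintegral_indicator m3]
      rfl
    rw [a3]
    calc _ ≤ (C1 * edist x v ^ (σ - n) * (1 + (C2 + edist x v ^ e *
            ∫⁻ y in {y | edist x y ≤ edist x v},
              edist x y ^ (β * q - e - n) * z y ^ q ∂μ))) * z v ^ q := by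
          gcongr
          refine a1.trans ?_
          gcongr
      _ = _ := by
          rw [ENNReal.rpow_add _ _ h0 h1]; ring
  have mm1 : Measurable fun v => C1 * (1 + C2) * (edist x v ^ (σ - n) * z v ^ q) := by fun_prop
  have step3 : ∫⁻ v, ∫⁻ y, {p : X × X | edist x p.2 ≤ edist x p.1}.indicator (fun p =>
        (edist x p.1 ^ (σ - n + e) * z p.1 ^ q) *
          (edist x p.2 ^ (β * q - e - n) * z p.2 ^ q)) (v, y) ∂μ ∂μ ≤
        C3 * D * pot μ n σ q z x := by
    rw [lintegral_lintegral_swap (by exact mI.aemeasurable), pot,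
      ← lintegral_const_mul _ (by fun_prop)]
    refine lintegral_mono_ae ?_
    filter_upwards [hne] with y hy
    have h0 : edist x y ≠ 0 := by simpa [edist_eq_zero] using hy.symm
    have h1 : edist x y ≠ ⊤ := edist_ne_top _ _
    have m3 : MeasurableSet {v | edist x y ≤ edist x v} :=
      measurableSet_le measurable_const (by fun_prop)
    calc _ = (∫⁻ v in {v | edist x y ≤ edist x v}, edist x v ^ (σ - n + e) * z v ^ q ∂μ) *
          (edist x y ^ (β * q - e - n) * z y ^ q) := by
          rw [← lintegral_mul_const _ (by fun_prop), ← lintegral_indicator m3]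
          rfl
      _ ≤ (C3 * D * edist x y ^ (σ - n + e + (n - β * q))) *
          (edist x y ^ (β * q - e - n) * z y ^ q) := by
          gcongr
          exact H3 (fun v => z v ^ q) (by fun_prop) x D _ h0 h1 (hD x)
      _ = _ := by
          have : edist x y ^ (σ - n) =
              edist x y ^ (σ - n + e + (n - β * q)) * edist x y ^ (β * q - e - n) := by
            rw [← ENNReal.rpow_add _ _ h0 h1]; ring_nf
          rw [this]; ring
  calc _ ≤ _ := lintegral_mono_ae step2
    _ = C1 * (1 + C2) * pot μ n σ q z x + C1 * ∫⁻ v, ∫⁻ y,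
        {p : X × X | edist x p.2 ≤ edist x p.1}.indicator (fun p =>
        (edist x p.1 ^ (σ - n + e) * z p.1 ^ q) *
          (edist x p.2 ^ (β * q - e - n) * z p.2 ^ q)) (v, y) ∂μ ∂μ := by
      rw [lintegral_add_left mm1, lintegral_const_mul _ (by fun_prop),
        lintegral_const_mul _ mI.lintegral_prod_right', pot]
    _ ≤ C1 * (1 + C2) * pot μ n σ q z x + C1 * (C3 * D * pot μ n σ q z x) := by gcongr
    _ = _ := by ring

lemma pot_finite (μ : Measure X) [SFinite μ] [NullSingletonClass μ] {n σ β q : ℝ} (hσ : 0 < σ)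
    (hσn : σ < n) (hσq : σ < β * q) {D : ℝ≥0∞} (hDt : D ≠ ⊤)
    (hvol : ∀ (x : X) (t : ℝ≥0∞), t ≠ 0 → t ≠ ⊤ → μ {y | edist x y ≤ t} ≤ D * t ^ n)
    {z : X → ℝ≥0∞} (hz : Measurable z)
    (hD : ∀ (x : X) (t : ℝ≥0∞), t ≠ 0 → t ≠ ⊤ →
      ∫⁻ y in {y | edist x y ≤ t}, z y ^ q ∂μ ≤ D * t ^ (n - β * q)) :
    ∀ᵐ y ∂μ, pot μ n σ q z y < ⊤ := by
  rcases isEmpty_or_nonempty X with hX | ⟨⟨o⟩⟩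
  · exact Eventually.of_forall fun y => hX.elim y
  obtain ⟨C1, hC1, H1⟩ := near μ (σ - n) n (by linarith) (by linarith)
  obtain ⟨C2, hC2, H2⟩ := far μ (σ - n) (n - β * q) (by linarith) (by linarith)
  have mI : Measurable fun p : X × X =>
      {p : X × X | edist p.1 p.2 ≤ 1}.indicator (fun p => edist p.1 p.2 ^ (σ - n) * z p.2 ^ q) p :=
    Measurable.indicator (by fun_prop) (measurableSet_le (by fun_prop) (by fun_prop))
  set A : X → ℝ≥0∞ := fun y => ∫⁻ v, {p : X × X | edist p.1 p.2 ≤ 1}.indicator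
    (fun p => edist p.1 p.2 ^ (σ - n) * z p.2 ^ q) (y, v) ∂μ with hA
  have hAm : Measurable A := mI.lintegral_prod_right'
  have hle : ∀ y, pot μ n σ q z y ≤ A y + C2 * D := by
    intro y
    have m1 : MeasurableSet {v | edist y v ≤ 1} := measurableSet_le (by fun_prop) measurable_const
    have hA' : A y = ∫⁻ v in {v | edist y v ≤ 1}, edist y v ^ (σ - n) * z v ^ q ∂μ := by
      rw [← lintegral_indicator m1]; rfl
    rw [pot, ← lintegral_add_compl _ m1, ← hA']
    gcongr
    refine (lintegral_mono_set ?_).trans ((H2 (fun v => z v ^ q) (by fun_prop) y D 1 (by simp)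
      (by simp) (hD y)).trans (by simp))
    intro v hv
    simp only [mem_compl_iff, mem_ofPred_eq, not_le] at hv ⊢
    exact hv.le
  have hfin : ∀ N : ℕ, ∀ᵐ y ∂μ, y ∈ {y | edist o y ≤ N} → A y < ⊤ := by
    intro N
    have mN : MeasurableSet {y | edist o y ≤ N} := measurableSet_le (by fun_prop) measurable_const
    have mN1 : MeasurableSet {y | edist o y ≤ N + 1} :=
      measurableSet_le (by fun_prop) measurable_const
    rw [← ae_restrict_iff' mN]
    refine ae_lt_top hAm (ne_top_of_le_ne_top (b := C1 * D * (D * (N + 1) ^ (n - β * q))) ?_ ?_)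
    · have : ((N : ℝ≥0∞) + 1) ^ (n - β * q) ≠ ⊤ := rpow_ne_top'' (by simp) (by finiteness) _
      finiteness
    · calc ∫⁻ y in {y | edist o y ≤ N}, A y ∂μ
          = ∫⁻ v, ∫⁻ y in {y | edist o y ≤ N}, {p : X × X | edist p.1 p.2 ≤ 1}.indicator
            (fun p => edist p.1 p.2 ^ (σ - n) * z p.2 ^ q) (y, v) ∂μ ∂μ := by
            rw [hA, lintegral_lintegral_swap (by exact mI.aemeasurable)]
        _ ≤ ∫⁻ v, {y | edist o y ≤ N + 1}.indicator (fun v => C1 * D * z v ^ q) v ∂μ := by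
            refine lintegral_mono fun v => ?_
            by_cases hv : edist o v ≤ N + 1
            · rw [indicator_of_mem (by exact hv)]
              have m1 : MeasurableSet {y | edist v y ≤ 1} :=
                measurableSet_le (by fun_prop) measurable_const
              calc _ ≤ ∫⁻ y, {p : X × X | edist p.1 p.2 ≤ 1}.indicator
                    (fun p => edist p.1 p.2 ^ (σ - n) * z p.2 ^ q) (y, v) ∂μ :=
                    setLIntegral_le_lintegral _ _
                _ = (∫⁻ y in {y | edist v y ≤ 1}, edist v y ^ (σ - n) * 1 ∂μ) * z v ^ q := by
                    rw [← lintegral_mul_const _ (by fun_prop), ← lintegral_indicator m1]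
                    congr 1; ext y
                    simp only [indicator, mem_ofPred_eq, edist_comm y v, mul_one]
                _ ≤ _ := by
                    gcongr
                    refine (H1 (fun _ => 1) measurable_const v D 1 (by simp) (by simp) ?_).trans
                      (by simp)
                    intro t h0 h1
                    simpa using hvol v t h0 h1
            · refine le_of_eq_of_le ?_ zero_le
              rw [setLIntegral_eq_zero_iff mN (by fun_prop)]
              refine Eventually.of_forall fun y hy => ?_
              refine indicator_of_notMem ?_ _
              intro hyv
              exact hv ((edist_triangle o y v).trans (add_le_add hy hyv))
        _ = C1 * D * ∫⁻ v in {y | edist o y ≤ N + 1}, z v ^ q ∂μ := by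
            rw [lintegral_indicator mN1, lintegral_const_mul _ (by fun_prop)]
        _ ≤ _ := by
            gcongr
            exact hD o _ (by simp) (by finiteness)
  filter_upwards [ae_all_iff.2 hfin] with y hy
  obtain ⟨N, hN⟩ := ENNReal.exists_nat_gt (edist_ne_top o y)
  refine (hle y).trans_lt ?_
  have := hy N hN.le
  finiteness

lemma schur (μ : Measure X) [SFinite μ] [NullSingletonClass μ] {n β q : ℝ} (hβ : 0 < β)
    (hβn : β < n) (hq : 1 < q) (hqn : β * q ≤ n) {D : ℝ≥0∞} (hDt : D ≠ ⊤)
    (hvol : ∀ (x : X) (t : ℝ≥0∞), t ≠ 0 → t ≠ ⊤ → μ {y | edist x y ≤ t} ≤ D * t ^ n) :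
    ∃ C : ℝ≥0∞, C ≠ ⊤ ∧ ∀ z : X → ℝ≥0∞, Measurable z →
    (∀ (x : X) (t : ℝ≥0∞), t ≠ 0 → t ≠ ⊤ →
      ∫⁻ y in {y | edist x y ≤ t}, z y ^ q ∂μ ≤ D * t ^ (n - β * q)) →
    ∀ g : X → ℝ≥0∞, Measurable g →
      ∫⁻ x, z x * (∫⁻ y, edist x y ^ (β - n) * (z y ^ (1 / 2 : ℝ) * g y) ∂μ) ^ (2 : ℝ) ∂μ ≤
      C * ∫⁻ y, g y ^ (2 : ℝ) ∂μ := by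
  have hq1 : 0 < β * (q - 1) := mul_pos hβ (by linarith)
  obtain ⟨C, hC, H⟩ := potential μ hβ hβn hq hqn hDt hvol
  refine ⟨C * C, by finiteness, ?_⟩
  intro z hz hD g hg
  have Hz := H z hz hD
  obtain ⟨φ, hφ⟩ : ∃ φ, φ = pot μ n (β * (q + 1) / 2) q z := ⟨_, rfl⟩
  have hφm : Measurable φ := hφ ▸ meas_pot μ _ _ _ hz
  have hφt : ∀ᵐ y ∂μ, φ y < ⊤ := by
    rw [hφ]
    exact pot_finite μ (by linarith) (by linarith) (by linarith) hDt hvol hz hD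
  rw [← hφ] at Hz
  by_cases hz0 : ∀ᵐ y ∂μ, z y = 0
  · refine le_of_eq_of_le ?_ zero_le
    rw [lintegral_eq_zero_iff' ?_]
    · filter_upwards [hz0] with x hx
      simp [hx]
    · refine (AEMeasurable.congr aemeasurable_zero ?_)
      filter_upwards [hz0] with x hx
      simp [hx]
  have hφ0 : ∀ y, φ y ≠ 0 := by
    intro y h0
    apply hz0
    rw [hφ, pot, lintegral_eq_zero_iff (by fun_prop)] at h0
    filter_upwards [h0] with v hv
    have hqp : ¬ q < 0 := by linarith
    have : ¬ (0 < β * (q + 1) / 2 - n) := by linarith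
    simpa [ENNReal.rpow_eq_zero_iff, this, hqp, edist_ne_top,
      show 0 < q by linarith] using hv
  have hconj : Real.HolderConjugate 2 2 := by
    rw [Real.holderConjugate_iff]; norm_num
  have hh : ∀ k : ℝ≥0∞, k ^ (1 / 2 : ℝ) * k ^ (1 / 2 : ℝ) = k := by
    intro k
    rw [← ENNReal.rpow_add_of_nonneg _ _ (by norm_num) (by norm_num)]; norm_num
  have hh2 : ∀ k : ℝ≥0∞, (k ^ (1 / 2 : ℝ)) ^ (2 : ℝ) = k := by
    intro k
    rw [← ENNReal.rpow_mul]; norm_num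
  have cs : ∀ x, (∫⁻ y, edist x y ^ (β - n) * (z y ^ (1 / 2 : ℝ) * g y) ∂μ) ^ (2 : ℝ) ≤
      C * φ x * ∫⁻ y, edist x y ^ (β - n) * (g y ^ (2 : ℝ) * (φ y)⁻¹) ∂μ := by
    intro x
    have e1 : ∫⁻ y, edist x y ^ (β - n) * (z y ^ (1 / 2 : ℝ) * g y) ∂μ =
        ∫⁻ y, ((fun y => (edist x y ^ (β - n) * (z y * φ y)) ^ (1 / 2 : ℝ)) *
          (fun y => (edist x y ^ (β - n)) ^ (1 / 2 : ℝ) * (g y * (φ y ^ (1 / 2 : ℝ))⁻¹))) y ∂μ := by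
      refine lintegral_congr_ae ?_
      filter_upwards [hφt] with y hy
      have c1 : φ y ^ (1 / 2 : ℝ) * (φ y ^ (1 / 2 : ℝ))⁻¹ = 1 :=
        ENNReal.mul_inv_cancel (rpow_ne_zero'' (hφ0 y) hy.ne _) (rpow_ne_top'' (hφ0 y) hy.ne _)
      simp only [Pi.mul_apply]
      rw [ENNReal.mul_rpow_of_nonneg _ _ (by norm_num), ENNReal.mul_rpow_of_nonneg _ _ (by norm_num)]
      nth_rw 1 [← hh (edist x y ^ (β - n))]
      calc _ = (edist x y ^ (β - n)) ^ (1 / 2 : ℝ) * (edist x y ^ (β - n)) ^ (1 / 2 : ℝ) *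
            (z y ^ (1 / 2 : ℝ) * g y) * 1 := by rw [mul_one]
        _ = _ := by rw [← c1]; ring
    have e2 := ENNReal.lintegral_mul_le_Lp_mul_Lq μ hconj
      (f := fun y => (edist x y ^ (β - n) * (z y * φ y)) ^ (1 / 2 : ℝ))
      (g := fun y => (edist x y ^ (β - n)) ^ (1 / 2 : ℝ) * (g y * (φ y ^ (1 / 2 : ℝ))⁻¹))
      (by fun_prop) (by fun_prop)
    rw [e1]
    refine (ENNReal.rpow_le_rpow e2 (by norm_num)).trans ?_
    rw [ENNReal.mul_rpow_of_nonneg _ _ (by norm_num), hh2, hh2]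
    refine mul_le_mul' ?_ (le_of_eq ?_)
    · simp only [hh2]
      exact Hz x
    · congr 1; ext y
      rw [ENNReal.mul_rpow_of_nonneg _ _ (by norm_num), ENNReal.mul_rpow_of_nonneg _ _ (by norm_num),
        ENNReal.inv_rpow, hh2, hh2]
  have mG : Measurable fun p : X × X =>
      z p.1 * (C * φ p.1) * (edist p.1 p.2 ^ (β - n) * (g p.2 ^ (2 : ℝ) * (φ p.2)⁻¹)) := by
    fun_prop
  calc _ ≤ ∫⁻ x, z x * (C * φ x * ∫⁻ y, edist x y ^ (β - n) * (g y ^ (2 : ℝ) * (φ y)⁻¹) ∂μ) ∂μ :=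
        lintegral_mono fun x => mul_le_mul_right (cs x) _
    _ = ∫⁻ x, ∫⁻ y, z x * (C * φ x) *
          (edist x y ^ (β - n) * (g y ^ (2 : ℝ) * (φ y)⁻¹)) ∂μ ∂μ := by
        congr 1; ext x
        rw [lintegral_const_mul _ (by fun_prop), mul_assoc (z x)]
    _ = ∫⁻ y, ∫⁻ x, z x * (C * φ x) *
          (edist x y ^ (β - n) * (g y ^ (2 : ℝ) * (φ y)⁻¹)) ∂μ ∂μ :=
        lintegral_lintegral_swap (by exact mG.aemeasurable)
    _ = ∫⁻ y, C * (g y ^ (2 : ℝ) * (φ y)⁻¹) *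
          ∫⁻ x, edist y x ^ (β - n) * (z x * φ x) ∂μ ∂μ := by
        congr 1; ext y
        rw [← lintegral_const_mul _ (by fun_prop)]
        congr 1; ext x
        rw [edist_comm y x]; ring
    _ ≤ ∫⁻ y, C * (g y ^ (2 : ℝ) * (φ y)⁻¹) * (C * φ y) ∂μ :=
        lintegral_mono fun y => mul_le_mul_right (Hz y) _
    _ ≤ ∫⁻ y, C * C * g y ^ (2 : ℝ) ∂μ := by
        refine lintegral_mono fun y => ?_
        calc _ = C * C * g y ^ (2 : ℝ) * ((φ y)⁻¹ * φ y) := by ring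
          _ ≤ C * C * g y ^ (2 : ℝ) * 1 := by
              gcongr
              exact ENNReal.inv_mul_le_one _
          _ = _ := mul_one _
    _ = _ := lintegral_const_mul _ (by fun_prop)

end core

lemma vol_cube {n : ℕ} (a : Fin n → ℝ) (s : ℝ) :
    volume (cube a s) = ENNReal.ofReal s ^ n := by
  have h : cube a s = (MeasurableEquiv.toLp 2 (Fin n → ℝ)).symm ⁻¹'
      (Set.Icc a (fun i => a i + s)) := by
    ext x
    simp only [cube, Set.mem_preimage, Set.mem_Icc, Pi.le_def, Set.mem_ofPred_eq]
    exact forall_and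
  rw [h, (EuclideanSpace.volume_preserving_symm_measurableEquiv_toLp (Fin n)).measure_preimage
    measurableSet_Icc.nullMeasurableSet, Real.volume_Icc_pi]
  simp

lemma vol_ball (n : ℕ) (hn : 3 ≤ n) : ∃ c : ℝ≥0∞, c ≠ ⊤ ∧ ∀ (x : Euc n) (t : ℝ≥0∞),
    t ≠ 0 → t ≠ ⊤ → volume {y | edist x y ≤ t} ≤ c * t ^ (n : ℝ) := by
  have : Nonempty (Fin n) := ⟨⟨0, by omega⟩⟩
  refine ⟨ENNReal.ofReal (√Real.pi ^ n / Real.Gamma ((n : ℝ) / 2 + 1)), ENNReal.ofReal_ne_top, fun x t h0 h1 => le_of_eq ?_⟩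
  have h : {y | edist x y ≤ t} = closedBall x t.toReal := by
    ext y
    simp only [Set.mem_ofPred_eq, mem_closedBall]
    rw [edist_comm, edist_dist, ENNReal.ofReal_le_iff_le_toReal h1]
  rw [h, EuclideanSpace.volume_closedBall, ENNReal.ofReal_toReal h1, mul_comm, Fintype.card_fin,
    ENNReal.rpow_natCast]

lemma morrey_bound (n : ℕ) (hn : 3 ≤ n) {α p : ℝ} (hp : 0 < p) {V : Euc n → ℝ} (hV : 0 ≤ V)
    (x : Euc n) (t : ℝ≥0∞) (h0 : t ≠ 0) (h1 : t ≠ ⊤) :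
    ∫⁻ y in {y | edist x y ≤ t}, ENNReal.ofReal (V y) ^ p ≤
      morrey n α p V ^ p * (2 * t) ^ ((n : ℝ) - α * p) := by
  have hn0 : (n : ℝ) ≠ 0 := by positivity
  set s : ℝ := 2 * t.toReal with hs
  set a : Fin n → ℝ := fun i => x i - t.toReal with ha
  have hspos : 0 < s := by
    have := ENNReal.toReal_pos h0 h1
    positivity
  have hQ : ENNReal.ofReal s = 2 * t := by
    rw [hs, ENNReal.ofReal_mul (by norm_num), ENNReal.ofReal_toReal h1]; simp
  have q0 : 2 * t ≠ 0 := by simp [h0]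
  have q1 : 2 * t ≠ ⊤ := by finiteness
  have hsub : {y | edist x y ≤ t} ⊆ cube a s := by
    intro y hy i
    have hd : dist x y ≤ t.toReal := by
      rw [Set.mem_ofPred_eq, edist_dist, ENNReal.ofReal_le_iff_le_toReal h1] at hy
      exact hy
    have h2 : ‖(x - y) i‖ ≤ ‖x - y‖ := PiLp.norm_apply_le (x - y) i
    rw [← dist_eq_norm x y] at h2
    have h3 : |x i - y i| ≤ t.toReal := h2.trans hd
    rw [abs_le] at h3
    simp only [ha, hs]
    constructor <;> linarith [h3.1, h3.2]
  set I := ∫⁻ y in cube a s, ENNReal.ofReal (V y ^ p) with hI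
  have hle : volume (cube a s) ^ (α / n) * ((volume (cube a s))⁻¹ * I) ^ (1 / p) ≤
      morrey n α p V := by
    unfold morrey
    exact le_iSup_of_le a (le_iSup_of_le s (le_iSup_of_le hspos le_rfl))
  rw [vol_cube, hQ] at hle
  have hle2 := ENNReal.rpow_le_rpow hle hp.le
  rw [ENNReal.mul_rpow_of_nonneg _ _ hp.le, ← ENNReal.rpow_mul ((2 * t) ^ n),
    ← ENNReal.rpow_mul, one_div_mul_cancel hp.ne', ENNReal.rpow_one, ← ENNReal.rpow_natCast,
    ← ENNReal.rpow_mul, ← ENNReal.rpow_neg, show (n : ℝ) * (α / n * p) = α * p by field_simp,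
    ← mul_assoc, ← ENNReal.rpow_add _ _ q0 q1] at hle2
  calc _ ≤ ∫⁻ y in cube a s, ENNReal.ofReal (V y) ^ p := lintegral_mono_set hsub
    _ = I := by
      rw [hI]; congr 1; ext y
      rw [ENNReal.ofReal_rpow_of_nonneg (hV y) hp.le]
    _ = ((2 * t) ^ (α * p + -(n : ℝ)) * I) * (2 * t) ^ ((n : ℝ) - α * p) := by
      rw [mul_right_comm, ← ENNReal.rpow_add _ _ q0 q1,
        show α * p + -(n : ℝ) + ((n : ℝ) - α * p) = 0 by ring, ENNReal.rpow_zero, one_mul]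
    _ ≤ _ := by gcongr

lemma morrey_zero (n : ℕ) (hn : 3 ≤ n) {α p : ℝ} (hp : 0 < p) {V : Euc n → ℝ} (hV : 0 ≤ V)
    (hVm : Measurable V) (h : morrey n α p V = 0) : ∀ᵐ y, V y = 0 := by
  have : ∀ N : ℕ, ∀ᵐ y : Euc n, y ∈ {y : Euc n | edist 0 y ≤ (N + 1 : ℕ)} →
      ENNReal.ofReal (V y) ^ p = 0 := by
    intro N
    have mN : MeasurableSet {y : Euc n | edist 0 y ≤ (N + 1 : ℕ)} :=
      measurableSet_le (by fun_prop) measurable_const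
    have hb := morrey_bound n hn (α := α) hp hV 0 (N + 1 : ℕ) (by simp) (by simp)
    rw [h, ENNReal.zero_rpow_of_pos hp, zero_mul, nonpos_iff_eq_zero,
      setLIntegral_eq_zero_iff mN (by fun_prop)] at hb
    exact hb
  filter_upwards [ae_all_iff.2 this] with y hy
  obtain ⟨N, hN⟩ := ENNReal.exists_nat_gt (edist_ne_top (0 : Euc n) y)
  have h1 := hy N (hN.le.trans (by simp))
  rw [ENNReal.rpow_eq_zero_iff_of_pos hp, ENNReal.ofReal_eq_zero] at h1
  exact le_antisymm h1 (hV y)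

lemma morrey_mono (n : ℕ) {α p : ℝ} (hp : 0 < p) {V U : Euc n → ℝ} (hU : 0 ≤ U)
    (h : U ≤ V) : morrey n α p U ≤ morrey n α p V := by
  unfold morrey
  gcongr with a s hs y
  · exact hU y
  · exact h y

end WE

/-- Weighted endpoint estimate for the boundary case `Re z = n-1+ε` of the analytic family. -/
theorem weighted_endpoint_estimate (n : ℕ) (hn : 3 ≤ n) (α ε q p : ℝ) (hα0 : 0 < α)
    (hαn : α < n) (hε0 : 0 < ε) (hε1 : ε < 1) (hq1 : 1 < q)
    (hq2 : q ≤ n / ((n : ℝ) - 1 + ε)) (hp : p = q * ((n : ℝ) - 1 + ε) / α) :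
    ∃ C : ℝ≥0∞, 0 < C ∧ C < ⊤ ∧ ∀ V : Euc n → ℝ, 0 ≤ V → Measurable V →
      morrey n α p V ≠ ⊤ → ∀ r : ℝ, 0 < r → ∀ g : Euc n → ℝ, Measurable g →
      (∫⁻ x in ball (0 : Euc n) r,
          (ENNReal.ofReal (V x ^ (((n : ℝ) - 1 + ε) / (2 * α))) *
            rieszE ((n : ℝ) - 1 + ε)
              (fun y => ENNReal.ofReal (V y ^ (((n : ℝ) - 1 + ε) / (2 * α))) *
                (‖g y‖₊ : ℝ≥0∞)) x) ^ (2 : ℝ)) ^ (1 / 2 : ℝ) ≤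
        C * morrey n α p (Set.indicator (ball (0 : Euc n) r) V) ^
            (((n : ℝ) - 1 + ε) / (2 * α)) *
          morrey n α p V ^ (((n : ℝ) - 1 + ε) / (2 * α)) *
          eLpNorm g 2 (volume : Measure (Euc n)) := by
  have hn3 : (3 : ℝ) ≤ n := by exact_mod_cast hn
  obtain ⟨β, hβ⟩ : ∃ β, β = (n : ℝ) - 1 + ε := ⟨_, rfl⟩
  rw [← hβ] at hq2 hp ⊢
  have hβ0 : 0 < β := by linarith
  have hβn : β < n := by linarith
  have hqn : β * q ≤ n := by
    rw [le_div_iff₀ hβ0] at hq2; linarith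
  have hp0 : 0 < p := by rw [hp]; positivity
  have hαp : α * p = β * q := by rw [hp]; field_simp
  obtain ⟨κ, hκ⟩ : ∃ κ, κ = β / (2 * α) := ⟨_, rfl⟩
  have hκ0 : 0 < κ := by rw [hκ]; positivity
  have hκq : 2 * κ * q = p := by rw [hp, hκ]; field_simp
  rw [← hκ]
  obtain ⟨c, hc, hvol⟩ := WE.vol_ball n hn
  have : Nonempty (Fin n) := ⟨⟨0, by omega⟩⟩
  have h2t : (2 : ℝ≥0∞) ^ ((n : ℝ) - β * q) ≠ ⊤ := WE.rpow_ne_top'' (by simp) (by simp) _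
  obtain ⟨C, hC, H⟩ := WE.schur (volume : Measure (Euc n)) (n := n) hβ0 hβn hq1 hqn
    (D := c + 2 * 2 ^ ((n : ℝ) - β * q)) (by finiteness)
    (fun x t h0 h1 => (hvol x t h0 h1).trans (by gcongr; exact le_self_add))
  have hCs : C ^ (1 / 2 : ℝ) ≠ ⊤ := ENNReal.rpow_ne_top_of_nonneg (by norm_num) hC
  refine ⟨C ^ (1 / 2 : ℝ) + 1, by simp, by finiteness, ?_⟩
  intro V hV hVm hM r hr g hg
  set B := ball (0 : Euc n) r with hB
  have hBm : MeasurableSet B := measurableSet_ball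
  set U := B.indicator V with hUdef
  have hU0 : 0 ≤ U := fun x => Set.indicator_nonneg (fun y _ => hV y) x
  have hUV : U ≤ V := fun x => Set.indicator_le_self' (fun y _ => hV y) x
  have hUm : Measurable U := hVm.indicator hBm
  set M := morrey n α p V with hMd
  set M' := morrey n α p U with hMd'
  have hMM : M' ≤ M := WE.morrey_mono n hp0 hU0 hUV
  have hM't : M' ≠ ⊤ := ne_top_of_le_ne_top hM hMM
  by_cases hM0 : M' = 0
  · have hz := WE.morrey_zero n hn hp0 hU0 hUm hM0
    refine le_of_eq_of_le ?_ zero_le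
    rw [ENNReal.rpow_eq_zero_iff_of_pos (by norm_num), setLIntegral_congr_fun_ae (g := fun _ => 0) hBm]
    · simp
    · filter_upwards [hz] with x hx hxB
      have : V x = 0 := by rwa [hUdef, Set.indicator_of_mem hxB] at hx
      simp [this, Real.zero_rpow hκ0.ne']
  have hMn0 : M ≠ 0 := fun h => hM0 (le_antisymm (h ▸ hMM) zero_le)
  set z : Euc n → ℝ≥0∞ := fun y => max (ENNReal.ofReal (V y) ^ (2 * κ) * (M ^ (2 * κ))⁻¹)
    (ENNReal.ofReal (U y) ^ (2 * κ) * (M' ^ (2 * κ))⁻¹) with hz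
  have hzm : Measurable z := by fun_prop
  have bnd : ∀ (T : Euc n → ℝ) (hT : 0 ≤ T) (hTm : Measurable T) (h0 : morrey n α p T ≠ 0)
      (h1 : morrey n α p T ≠ ⊤) (x : Euc n) (t : ℝ≥0∞), t ≠ 0 → t ≠ ⊤ →
      ∫⁻ y in {y | edist x y ≤ t},
        (ENNReal.ofReal (T y) ^ (2 * κ) * (morrey n α p T ^ (2 * κ))⁻¹) ^ q ≤
      (2 : ℝ≥0∞) ^ ((n : ℝ) - β * q) * t ^ ((n : ℝ) - β * q) := by
    intro T hT hTm h0 h1 x t ht0 ht1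
    have e : ∀ y, (ENNReal.ofReal (T y) ^ (2 * κ) * (morrey n α p T ^ (2 * κ))⁻¹) ^ q =
        ENNReal.ofReal (T y) ^ p * (morrey n α p T ^ p)⁻¹ := by
      intro y
      rw [ENNReal.mul_rpow_of_nonneg _ _ (by linarith), ENNReal.inv_rpow, ← ENNReal.rpow_mul,
        ← ENNReal.rpow_mul, hκq]
    simp only [e]
    rw [lintegral_mul_const _ (by fun_prop)]
    have hb := WE.morrey_bound n hn (α := α) hp0 hT x t ht0 ht1
    rw [hαp, ENNReal.mul_rpow_of_ne_top (by simp) ht1] at hb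
    calc _ ≤ _ := mul_le_mul_left hb _
      _ = (morrey n α p T ^ p * (morrey n α p T ^ p)⁻¹) *
          ((2 : ℝ≥0∞) ^ ((n : ℝ) - β * q) * t ^ ((n : ℝ) - β * q)) := by ring
      _ = _ := by
        rw [ENNReal.mul_inv_cancel (WE.rpow_ne_zero'' h0 h1 _) (WE.rpow_ne_top'' h0 h1 _), one_mul]
  have hzb : ∀ (x : Euc n) (t : ℝ≥0∞), t ≠ 0 → t ≠ ⊤ →
      ∫⁻ y in {y | edist x y ≤ t}, z y ^ q ≤
        (c + 2 * 2 ^ ((n : ℝ) - β * q)) * t ^ ((n : ℝ) - β * q) := by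
    intro x t h0 h1
    calc _ ≤ ∫⁻ y in {y | edist x y ≤ t},
          ((ENNReal.ofReal (V y) ^ (2 * κ) * (M ^ (2 * κ))⁻¹) ^ q +
            (ENNReal.ofReal (U y) ^ (2 * κ) * (M' ^ (2 * κ))⁻¹) ^ q) := by
          refine lintegral_mono fun y => ?_
          simp only [hz]
          rcases max_choice (ENNReal.ofReal (V y) ^ (2 * κ) * (M ^ (2 * κ))⁻¹)
            (ENNReal.ofReal (U y) ^ (2 * κ) * (M' ^ (2 * κ))⁻¹) with h | h
          · rw [h]; exact le_self_add
          · rw [h]; exact le_add_self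
      _ = _ := lintegral_add_left (by fun_prop) _
      _ ≤ _ := add_le_add (bnd V hV hVm hMn0 hM x t h0 h1) (bnd U hU0 hUm hM0 hM't x t h0 h1)
      _ = (2 * 2 ^ ((n : ℝ) - β * q)) * t ^ ((n : ℝ) - β * q) := by ring
      _ ≤ _ := by gcongr; exact le_add_self
  have hfin := H z hzm hzb (fun y => (‖g y‖₊ : ℝ≥0∞)) (by fun_prop)
  have root : ∀ (a m w : ℝ≥0∞), m ≠ 0 → m ≠ ⊤ → a ^ (2 * κ) * (m ^ (2 * κ))⁻¹ ≤ w →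
      a ^ κ ≤ m ^ κ * w ^ (1 / 2 : ℝ) := by
    intro a m w h0 h1 h
    have h2 := ENNReal.rpow_le_rpow h (z := 1 / 2) (by norm_num)
    rw [ENNReal.mul_rpow_of_nonneg _ _ (by norm_num), ENNReal.inv_rpow, ← ENNReal.rpow_mul,
      ← ENNReal.rpow_mul, show 2 * κ * (1 / 2) = κ by ring] at h2
    rw [← div_eq_mul_inv, ENNReal.div_le_iff (WE.rpow_ne_zero'' h0 h1 _)
      (WE.rpow_ne_top'' h0 h1 _)] at h2
    rwa [mul_comm]
  have hVz : ∀ y, ENNReal.ofReal (V y ^ κ) ≤ M ^ κ * z y ^ (1 / 2 : ℝ) := by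
    intro y
    rw [← ENNReal.ofReal_rpow_of_nonneg (hV y) hκ0.le]
    exact root _ _ _ hMn0 hM (le_max_left _ _)
  have hUz : ∀ y ∈ B, ENNReal.ofReal (V y ^ κ) ≤ M' ^ κ * z y ^ (1 / 2 : ℝ) := by
    intro y hy
    rw [← ENNReal.ofReal_rpow_of_nonneg (hV y) hκ0.le]
    have : V y = U y := by rw [hUdef, Set.indicator_of_mem hy]
    rw [this]
    exact root _ _ _ hM0 hM't (le_max_right _ _)
  have hR : ∀ x, rieszE β (fun y => ENNReal.ofReal (V y ^ κ) * (‖g y‖₊ : ℝ≥0∞)) x ≤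
      M ^ κ * ∫⁻ y, edist x y ^ (β - n) * (z y ^ (1 / 2 : ℝ) * (‖g y‖₊ : ℝ≥0∞)) := by
    intro x
    unfold rieszE
    rw [← lintegral_const_mul _ (by fun_prop)]
    refine lintegral_mono fun y => ?_
    dsimp only
    rw [ofReal_norm, ← edist_eq_enorm_sub]
    calc _ ≤ edist x y ^ (β - n) * (M ^ κ * z y ^ (1 / 2 : ℝ) * (‖g y‖₊ : ℝ≥0∞)) := by
          gcongr; exact hVz y
      _ = _ := by ring
  have hint : ∫⁻ x in B, (ENNReal.ofReal (V x ^ κ) *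
        rieszE β (fun y => ENNReal.ofReal (V y ^ κ) * (‖g y‖₊ : ℝ≥0∞)) x) ^ (2 : ℝ) ≤
      (M' ^ κ * M ^ κ) ^ (2 : ℝ) * (C * ∫⁻ y, (‖g y‖₊ : ℝ≥0∞) ^ (2 : ℝ)) := by
    calc _ ≤ ∫⁻ x in B, (M' ^ κ * M ^ κ) ^ (2 : ℝ) * (z x *
          (∫⁻ y, edist x y ^ (β - n) * (z y ^ (1 / 2 : ℝ) * (‖g y‖₊ : ℝ≥0∞))) ^ (2 : ℝ)) := by
          refine setLIntegral_mono' hBm fun x hx => ?_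
          calc _ ≤ ((M' ^ κ * z x ^ (1 / 2 : ℝ)) * (M ^ κ * ∫⁻ y, edist x y ^ (β - n) *
                (z y ^ (1 / 2 : ℝ) * (‖g y‖₊ : ℝ≥0∞)))) ^ (2 : ℝ) :=
                ENNReal.rpow_le_rpow (mul_le_mul' (hUz x hx) (hR x)) (by norm_num)
            _ = _ := by
                rw [mul_mul_mul_comm, ENNReal.mul_rpow_of_nonneg _ _ (by norm_num),
                  ENNReal.mul_rpow_of_nonneg (z x ^ (1 / 2 : ℝ)) _ (by norm_num),
                  ← ENNReal.rpow_mul (z x)]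
                norm_num
      _ ≤ ∫⁻ x, (M' ^ κ * M ^ κ) ^ (2 : ℝ) * (z x *
          (∫⁻ y, edist x y ^ (β - n) * (z y ^ (1 / 2 : ℝ) * (‖g y‖₊ : ℝ≥0∞))) ^ (2 : ℝ)) :=
          setLIntegral_le_lintegral _ _
      _ = (M' ^ κ * M ^ κ) ^ (2 : ℝ) * ∫⁻ x, (z x *
          (∫⁻ y, edist x y ^ (β - n) * (z y ^ (1 / 2 : ℝ) * (‖g y‖₊ : ℝ≥0∞))) ^ (2 : ℝ)) := by
          refine lintegral_const_mul' _ _ ?_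
          have := WE.rpow_ne_top'' hM0 hM't κ
          have := WE.rpow_ne_top'' hMn0 hM κ
          exact ENNReal.rpow_ne_top_of_nonneg (by norm_num) (by finiteness)
      _ ≤ _ := by gcongr
  have hL2 : eLpNorm g 2 (volume : Measure (Euc n)) =
      (∫⁻ y, (‖g y‖₊ : ℝ≥0∞) ^ (2 : ℝ)) ^ (1 / 2 : ℝ) := by
    rw [eLpNorm_eq_lintegral_rpow_enorm_toReal (by simp) (by simp)]
    simp [enorm]
  rw [hL2]
  calc _ ≤ _ := ENNReal.rpow_le_rpow hint (by norm_num)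
    _ = C ^ (1 / 2 : ℝ) * M' ^ κ * M ^ κ *
        (∫⁻ y, (‖g y‖₊ : ℝ≥0∞) ^ (2 : ℝ)) ^ (1 / 2 : ℝ) := by
      rw [ENNReal.mul_rpow_of_nonneg _ _ (by norm_num), ENNReal.mul_rpow_of_nonneg C _ (by norm_num),
        ← ENNReal.rpow_mul, show (2 : ℝ) * (1 / 2) = 1 by norm_num, ENNReal.rpow_one]
      ring
    _ ≤ _ := by gcongr; exact le_self_add
end
end
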